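/- Satisfiability of quantifier-free formulas of the string-constraint theory T_{RE,ln} is decidable: there exists a computable function f from (Gödel encodings of) such formulas, with their regular-membership atoms presented by DFAs, to Bool such that f(φ) = true if and only if φ has a satisfying assignment (strings in {0,1}^* for string variables and natural numbers for integer variables). (The paper moreover shows the problem lies in EXPSPACE.) -/

import Mathlib

/-- A DFA over the alphabet `{0,1}`, presented as finite data: states are numbers and the
transition table maps the index `2 * q + b` to the next state. -/
structure RawDFA2 where
  states : ℕ
  trans : List ℕ
  start : ℕ
  accept : List ℕ

/-- The (deterministic) transition function of the DFA. -/
def RawDFA2.step (D : RawDFA2) (q : ℕ) (b : Bool) : ℕ := D.trans.getD (2 * q + b.toNat) 0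

/-- The state reached on reading a word. -/
def RawDFA2.run (D : RawDFA2) (w : List Bool) : ℕ := w.foldl D.step D.start

/-- The DFA accepts a bit string. -/
def RawDFA2.Accepts (D : RawDFA2) (w : List Bool) : Prop := D.run w ∈ D.accept

/-- The natural number denoted by a bit string in most-significant-digit-first notation. -/
def strVal (s : List Bool) : ℕ := s.foldl (fun acc b => 2 * acc + b.toNat) 0

/-- Quantifier-free formulas of the string-constraint theory `T_{RE,ln}`, over string
variables (indexed by `ℕ`, ranging over `{0,1}^*`) and integer variables (indexed by `ℕ`,
ranging over `ℕ`): regular membership `R(s)` with `R` presented by a DFA, equalities and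
disequalities of string variables, length atoms `len(s) = x`, value atoms `strnum(s) = x`,
linear constraints `a₁·x₀ + ⋯ + a_l·x_{l-1} ≥ b`, and conjunctions and disjunctions. -/
inductive TFml where
  | reg : RawDFA2 → ℕ → TFml
  | eq : ℕ → ℕ → TFml
  | ne : ℕ → ℕ → TFml
  | len : ℕ → ℕ → TFml
  | num : ℕ → ℕ → TFml
  | lin : List ℤ → ℤ → TFml
  | and : TFml → TFml → TFml
  | or : TFml → TFml → TFml

/-- Satisfaction under an assignment `I : ℕ → List Bool` of strings to the string variables
and an assignment `ν : ℕ → ℕ` of naturals to the integer variables. -/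
def TFml.Sat (I : ℕ → List Bool) (ν : ℕ → ℕ) : TFml → Prop
  | .reg D s => D.Accepts (I s)
  | .eq s t => I s = I t
  | .ne s t => I s ≠ I t
  | .len s x => (I s).length = ν x
  | .num s x => strVal (I s) = ν x
  | .lin c b => b ≤ ∑ i ∈ Finset.range c.length, c.getD i 0 * (ν i : ℤ)
  | .and φ ψ => φ.Sat I ν ∧ ψ.Sat I ν
  | .or φ ψ => φ.Sat I ν ∨ ψ.Sat I ν

/-- Gödel encoding of a DFA. -/
def RawDFA2.enc (D : RawDFA2) : ℕ :=
  Encodable.encode (D.states, D.trans, D.start, D.accept)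

/-- Gödel encoding of formulas. -/
def TFml.enc : TFml → ℕ
  | .reg D s => Nat.pair 0 (Nat.pair D.enc s)
  | .eq s t => Nat.pair 1 (Nat.pair s t)
  | .ne s t => Nat.pair 2 (Nat.pair s t)
  | .len s x => Nat.pair 3 (Nat.pair s x)
  | .num s x => Nat.pair 4 (Nat.pair s x)
  | .lin c b => Nat.pair 5 (Encodable.encode (c, b))
  | .and φ ψ => Nat.pair 6 (Nat.pair φ.enc ψ.enc)
  | .or φ ψ => Nat.pair 7 (Nat.pair φ.enc ψ.enc)

/-!
Write the values, lengths and powers `2 ^ len(s)` of the strings, and the integers, in binary on the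
tracks of one word over letters that carry a bit for every track, least significant digits first.
Every atom then becomes a property of that word decided by a finite automaton; what remains are the
constraints `Y = 2 ^ X` that tie the power track of a string to its length track.

These constraints are eliminated one by one, the one with the largest exponent `X` first. If `X` is
bounded, or within a bounded distance of another exponent, then `Y` is a constant, or a constant
multiple of another power, which is a regular condition. Otherwise the digits of the exponents and
of the other powers end far below the single digit `1` of `Y`; by pumping, an automaton sees the
number of letters in between only modulo a fixed period, so that `Y = 2 ^ X` turns into a regular
condition on the word below the gap. The outcome is a primitive recursive bound on the size of a
smallest satisfying assignment.
-/

/-! ### Binary values of tracks -/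

section BinVal

variable {α R : Type*} [CommSemiring R]

/-- The value `∑ i, 2 ^ i * f aᵢ` of the word `a₀ a₁ ⋯`, whose letters carry the digits `f`.
The digit at the head of the list is the least significant one, so that reading a word from left
to right performs the schoolbook algorithms of arithmetic. -/
def binVal (f : α → R) : List α → R
  | [] => 0
  | a :: u => f a + 2 * binVal f u

@[simp] theorem binVal_nil (f : α → R) : binVal f [] = 0 := rfl

@[simp] theorem binVal_cons (f : α → R) (a : α) (u : List α) :
    binVal f (a :: u) = f a + 2 * binVal f u := rfl

theorem binVal_append (f : α → R) (u v : List α) :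
    binVal f (u ++ v) = binVal f u + 2 ^ u.length * binVal f v := by
  induction u with
  | nil => simp
  | cons a u ih => simp only [List.cons_append, binVal_cons, ih, List.length_cons]; ring

theorem binVal_append_singleton (f : α → R) (u : List α) (a : α) :
    binVal f (u ++ [a]) = binVal f u + 2 ^ u.length * f a := by
  simp [binVal_append]

theorem binVal_natCast (f : α → ℕ) (u : List α) :
    binVal (fun a => (f a : R)) u = (binVal f u : ℕ) := by
  induction u with
  | nil => simp
  | cons a u ih => simp [ih]

theorem binVal_const_mul (c : R) (f : α → R) (u : List α) :
    binVal (fun a => c * f a) u = c * binVal f u := by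
  induction u with
  | nil => simp
  | cons a u ih => simp only [binVal_cons, ih]; ring

theorem binVal_sum {ι : Type*} (s : Finset ι) (f : ι → α → R) (u : List α) :
    binVal (fun a => ∑ i ∈ s, f i a) u = ∑ i ∈ s, binVal (f i) u := by
  induction u with
  | nil => simp
  | cons a u ih => simp only [binVal_cons, ih, Finset.sum_add_distrib, Finset.mul_sum]

end BinVal

section TrackVal

variable {α β : Type*}

/-- The natural number whose binary digits are the bits `f a` of the letters `a` of a word, least
significant digit first. Several numbers are written on one word by giving its letters several
such tracks `f`. -/
def trackVal (f : α → Bool) (u : List α) : ℕ := binVal (fun a => (f a).toNat) u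

@[simp] theorem trackVal_nil (f : α → Bool) : trackVal f [] = 0 := rfl

@[simp] theorem trackVal_cons (f : α → Bool) (a : α) (u : List α) :
    trackVal f (a :: u) = (f a).toNat + 2 * trackVal f u := rfl

theorem trackVal_append (f : α → Bool) (u v : List α) :
    trackVal f (u ++ v) = trackVal f u + 2 ^ u.length * trackVal f v := binVal_append _ u v

theorem trackVal_map (f : β → Bool) (g : α → β) (u : List α) :
    trackVal f (u.map g) = trackVal (fun a => f (g a)) u := by
  induction u with
  | nil => rfl
  | cons a u ih => simp [ih]

theorem trackVal_lt_two_pow (f : α → Bool) (u : List α) : trackVal f u < 2 ^ u.length := by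
  induction u with
  | nil => simp
  | cons a u ih =>
    have := (f a).toNat_lt
    simp only [trackVal_cons, List.length_cons, pow_succ]
    omega

theorem trackVal_eq_zero_iff {f : α → Bool} {u : List α} :
    trackVal f u = 0 ↔ ∀ a ∈ u, f a = false := by
  induction u with
  | nil => simp
  | cons a u ih => simp [ih]

theorem trackVal_true (u : List α) : trackVal (fun _ => true) u + 1 = 2 ^ u.length := by
  induction u with
  | nil => simp
  | cons a u ih => simp only [trackVal_cons, Bool.toNat_true, List.length_cons, pow_succ]; omega

theorem trackVal_take (f : α → Bool) (u : List α) (n : ℕ) :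
    trackVal f (u.take n) = trackVal f u % 2 ^ n := by
  rcases le_total u.length n with h | h
  · rw [List.take_of_length_le h, Nat.mod_eq_of_lt]
    exact (trackVal_lt_two_pow f u).trans_le (Nat.pow_le_pow_right two_pos h)
  · conv_rhs => rw [← List.take_append_drop n u, trackVal_append, List.length_take_of_le h,
      Nat.add_mul_mod_self_left]
    have := trackVal_lt_two_pow f (u.take n)
    rw [List.length_take_of_le h] at this
    exact (Nat.mod_eq_of_lt this).symm

theorem trackVal_drop (f : α → Bool) (u : List α) (n : ℕ) :
    trackVal f (u.drop n) = trackVal f u / 2 ^ n := by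
  rcases le_total u.length n with h | h
  · rw [List.drop_of_length_le h, Nat.div_eq_of_lt, trackVal_nil]
    exact (trackVal_lt_two_pow f u).trans_le (Nat.pow_le_pow_right two_pos h)
  · have := trackVal_lt_two_pow f (u.take n)
    rw [List.length_take_of_le h] at this
    conv_rhs => rw [← List.take_append_drop n u, trackVal_append, List.length_take_of_le h,
      Nat.add_mul_div_left _ _ (by positivity), Nat.div_eq_of_lt this, zero_add]

theorem trackVal_take_of_lt {f : α → Bool} {u : List α} {n : ℕ} (h : trackVal f u < 2 ^ n) :
    trackVal f (u.take n) = trackVal f u := by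
  rw [trackVal_take, Nat.mod_eq_of_lt h]

theorem trackVal_drop_of_lt {f : α → Bool} {u : List α} {n : ℕ} (h : trackVal f u < 2 ^ n) :
    trackVal f (u.drop n) = 0 := by
  rw [trackVal_drop, Nat.div_eq_of_lt h]

theorem trackVal_eq_two_pow_iff {f : α → Bool} {u : List α} {n : ℕ} :
    trackVal f u = 2 ^ n ↔ ∃ v a v', u = v ++ a :: v' ∧ v.length = n ∧
      (∀ b ∈ v, f b = false) ∧ f a = true ∧ ∀ b ∈ v', f b = false := by
  constructor
  · intro h
    have h_low : trackVal f (u.take n) = 0 := by rw [trackVal_take, h, Nat.mod_self]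
    have h_high : trackVal f (u.drop n) = 1 := by
      rw [trackVal_drop, h, Nat.div_self (by positivity)]
    have h_len : n < u.length := (Nat.pow_lt_pow_iff_right one_lt_two).1
      (h ▸ trackVal_lt_two_pow f u)
    rw [List.drop_eq_getElem_cons h_len, trackVal_cons] at h_high
    have := (f u[n]).toNat_lt
    refine ⟨u.take n, u[n], u.drop (n + 1), ?_, List.length_take_of_le h_len.le,
      trackVal_eq_zero_iff.1 h_low, Bool.toNat_eq_one.1 (by omega),
      trackVal_eq_zero_iff.1 (by omega)⟩
    rw [← List.drop_eq_getElem_cons h_len, List.take_append_drop]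
  · rintro ⟨v, a, v', rfl, rfl, hv, ha, hv'⟩
    simp [trackVal_append, trackVal_eq_zero_iff.2 hv, trackVal_eq_zero_iff.2 hv', ha]

end TrackVal

/-! ### Functions computed by finite automata -/

/-- `FinState m g` says that `g` is computed by a Moore machine with at most `m` states; for a
`Prop`-valued `g` this is regularity of a language, with a bound on the state complexity. -/
def FinState {α β : Type*} (m : ℕ) (g : List α → β) : Prop :=
  ∃ (Q : Type) (_ : Fintype Q) (δ : Q → α → Q) (q₀ : Q) (out : Q → β),
    Fintype.card Q ≤ m ∧ ∀ u, g u = out (u.foldl δ q₀)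

namespace FinState

variable {α β γ : Type*} {m m' : ℕ}

theorem of_card_le {Q : Type} [Fintype Q] (hm : Fintype.card Q ≤ m) {g : List α → Q}
    (δ : Q → α → Q) (h : ∀ u a, g (u ++ [a]) = δ (g u) a) : FinState m g := by
  refine ⟨Q, inferInstance, δ, g [], id, hm, fun u => ?_⟩
  induction u using List.reverseRecOn with
  | nil => rfl
  | append_singleton u a ih => rw [h, ih, List.foldl_append]; rfl

theorem comp {g : List α → β} (h : FinState m g) (k : β → γ) :
    FinState m (fun u => k (g u)) := by
  obtain ⟨Q, _, δ, q₀, out, hm, hg⟩ := h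
  exact ⟨Q, _, δ, q₀, k ∘ out, hm, fun u => congrArg k (hg u)⟩

theorem mono {g : List α → β} (h : FinState m g) (hm : m ≤ m') : FinState m' g := by
  obtain ⟨Q, _, δ, q₀, out, hQ, hg⟩ := h
  exact ⟨Q, _, δ, q₀, out, hQ.trans hm, hg⟩

theorem pair {g : List α → β} {g' : List α → γ} (h : FinState m g) (h' : FinState m' g') :
    FinState (m * m') (fun u => (g u, g' u)) := by
  obtain ⟨Q, _, δ, q₀, out, hQ, hg⟩ := h
  obtain ⟨Q', _, δ', q₀', out', hQ', hg'⟩ := h'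
  have h_states : FinState (m * m') (fun u => (u.foldl δ q₀, u.foldl δ' q₀')) :=
    of_card_le (by rw [Fintype.card_prod]; exact Nat.mul_le_mul hQ hQ')
      (fun q a => (δ q.1 a, δ' q.2 a)) (by simp)
  simpa only [hg, hg'] using h_states.comp fun q => (out q.1, out' q.2)

theorem and {p p' : List α → Prop} (h : FinState m p) (h' : FinState m' p') :
    FinState (m * m') (fun u => p u ∧ p' u) :=
  (h.pair h').comp fun x => x.1 ∧ x.2

theorem or {p p' : List α → Prop} (h : FinState m p) (h' : FinState m' p') :
    FinState (m * m') (fun u => p u ∨ p' u) :=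
  (h.pair h').comp fun x => x.1 ∨ x.2

theorem forall_lt {p : ℕ → List α → Prop} (h : ∀ i, FinState m (p i)) (n : ℕ) :
    FinState (m ^ n) (fun u => ∀ i < n, p i u) := by
  induction n with
  | zero =>
    have h_unit : FinState (m ^ 0) (fun _ : List α => ()) :=
      of_card_le (by simp) (fun q _ => q) fun _ _ => rfl
    simpa using h_unit.comp fun _ => True
  | succ n ih => simpa only [pow_succ, Nat.forall_lt_succ_right] using ih.and (h n)

theorem map {g : List β → γ} (h : FinState m g) (k : α → β) :
    FinState m (fun u => g (u.map k)) := by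
  obtain ⟨Q, _, δ, q₀, out, hm, hg⟩ := h
  exact ⟨Q, _, fun q a => δ q (k a), q₀, out, hm, fun u => by simp [hg, List.foldl_map]⟩

/-- Left quotients: the remaining behaviour of a machine is determined by its current state. -/
theorem residual {g : List α → β} (h : FinState m g) :
    FinState m (fun u v => g (u ++ v)) := by
  obtain ⟨Q, _, δ, q₀, out, hm, hg⟩ := h
  exact ⟨Q, _, δ, q₀, fun q v => out (v.foldl δ q), hm, fun u => by simp [hg]⟩

/-- The machine for the reversed word keeps the transition function of the word read so far. -/
theorem reverse {g : List α → β} (h : FinState m g) :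
    FinState (m ^ m) (fun u => g u.reverse) := by
  classical
  obtain ⟨Q, _, δ, q₀, out, hm, hg⟩ := h
  have h_trans : FinState (m ^ m) (fun (u : List α) (q : Q) => u.reverse.foldl δ q) := by
    refine of_card_le ?_ (fun t a q => t (δ q a)) (by simp)
    rw [Fintype.card_fun]
    have : 0 < Fintype.card Q := Fintype.card_pos_iff.2 ⟨q₀⟩
    exact (Nat.pow_le_pow_left hm _).trans (Nat.pow_le_pow_right (this.trans_le hm) hm)
  simpa only [hg] using h_trans.comp fun t => out (t q₀)

theorem takeWhile {g : List α → β} (h : FinState m g) (p : α → Bool) :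
    FinState (m * 2) (fun u => g (u.takeWhile p)) := by
  obtain ⟨Q, _, δ, q₀, out, hm, hg⟩ := h
  have h_states : FinState (m * 2) (fun u => ((u.takeWhile p).foldl δ q₀, u.all p)) := by
    refine of_card_le (by simpa using hm)
      (fun q a => if q.2 then (if p a then δ q.1 a else q.1, p a) else q) fun u a => ?_
    by_cases hu : u.all p
    · have hu' : u.takeWhile p = u := List.takeWhile_eq_self_iff.2 (List.all_eq_true.1 hu)
      by_cases ha : p a <;> simp [List.takeWhile_append, hu, hu', ha]
    · have hlen : (u.takeWhile p).length ≠ u.length := fun h => hu <| List.all_eq_true.2 <|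
        List.takeWhile_eq_self_iff.1 ((List.takeWhile_prefix p).eq_of_length h)
      simp [List.takeWhile_append, hlen, hu]
  simpa only [hg] using h_states.comp fun q => out q.1

theorem length_cast (R : Type) [Fintype R] [AddMonoidWithOne R] :
    FinState (Fintype.card R) (fun u : List α => (u.length : R)) :=
  of_card_le le_rfl (fun q _ => q + 1) (by simp)

/-- The machine keeps the current power of two next to the value. -/
theorem binVal_of_fintype {R : Type} [Fintype R] [CommSemiring R] (f : α → R) :
    FinState (Fintype.card R * Fintype.card R) (binVal f) := by
  have h_states : FinState (Fintype.card R * Fintype.card R)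
      (fun u : List α => (binVal f u, (2 : R) ^ u.length)) :=
    of_card_le (by simp) (fun q a => (q.1 + q.2 * f a, q.2 * 2))
      (by simp [binVal_append_singleton, pow_succ])
  exact h_states.comp Prod.fst

end FinState

/-! ### Linear constraints on tracks -/

section Linear

variable {α ι : Type*}

/-- The state reached on `u` by the least-significant-first automaton for `b ≤ binVal f ·`. -/
def carry (f : α → ℤ) (b : ℤ) (u : List α) : ℤ := (binVal f u - b) / 2 ^ u.length

theorem carry_append_singleton (f : α → ℤ) (b : ℤ) (u : List α) (a : α) :
    carry f b (u ++ [a]) = (carry f b u + f a) / 2 := by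
  have h_pos : (2 : ℤ) ^ u.length ≠ 0 := by positivity
  rw [carry, carry, binVal_append_singleton, List.length_append, List.length_singleton, pow_succ,
    ← Int.ediv_ediv_of_nonneg (by positivity), add_sub_right_comm, Int.add_mul_ediv_left _ _ h_pos]

theorem abs_carry_le {f : α → ℤ} {A : ℕ} (hf : ∀ a, |f a| ≤ A) (b : ℤ) (u : List α) :
    |carry f b u| ≤ A + b.natAbs := by
  induction u using List.reverseRecOn with
  | nil => simp [carry]
  | append_singleton u a ih =>
    rw [carry_append_singleton]
    have := abs_le.1 (hf a)
    rw [abs_le] at ih ⊢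
    omega

theorem carry_nonneg_iff {f : α → ℤ} {b : ℤ} {u : List α} : 0 ≤ carry f b u ↔ b ≤ binVal f u := by
  rw [carry, Int.le_ediv_iff_mul_le (by positivity), zero_mul, sub_nonneg]

theorem FinState.le_binVal {f : α → ℤ} {A : ℕ} (hf : ∀ a, |f a| ≤ A) (b : ℤ) :
    FinState (2 * (A + b.natAbs) + 1) (fun u => b ≤ binVal f u) := by
  set C : ℤ := A + b.natAbs
  have h_carry : FinState (2 * (A + b.natAbs) + 1)
      (fun u => (⟨carry f b u, Finset.mem_Icc.2 (abs_le.1 (abs_carry_le hf b u))⟩ :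
        Finset.Icc (-C) C)) := by
    refine of_card_le ?_ (fun q a => ⟨(q + f a) / 2, ?_⟩)
      fun u a => Subtype.ext (carry_append_singleton f b u a)
    · rw [Fintype.card_coe, Int.card_Icc]; omega
    · have := abs_le.1 (hf a)
      have := Finset.mem_Icc.1 q.2
      rw [Finset.mem_Icc]
      omega
  simpa only [carry_nonneg_iff] using h_carry.comp fun q => 0 ≤ (q : ℤ)

theorem FinState.le_sum_mul_trackVal (s : Finset ι) (c : ι → ℤ) (x : ι → α → Bool) (b : ℤ) :
    FinState (2 * (∑ i ∈ s, (c i).natAbs + b.natAbs) + 1)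
      (fun u => b ≤ ∑ i ∈ s, c i * (trackVal (x i) u : ℤ)) := by
  have h_digit (a : α) : |∑ i ∈ s, c i * ((x i a).toNat : ℤ)| ≤ (∑ i ∈ s, (c i).natAbs : ℕ) := by
    push_cast
    refine (Finset.abs_sum_le_sum_abs _ _).trans (Finset.sum_le_sum fun i _ => ?_)
    cases x i a <;> simp
  simpa only [binVal_sum, binVal_const_mul, binVal_natCast, trackVal] using le_binVal h_digit b

theorem FinState.mul_trackVal_add_le (c d t : ℤ) (x y : α → Bool) :
    FinState (2 * (c.natAbs + d.natAbs + t.natAbs) + 1)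
      (fun u => c * trackVal y u + t ≤ d * trackVal x u) := by
  have h := le_sum_mul_trackVal Finset.univ (fun i : Bool => if i then d else -c)
    (fun i => if i then x else y) t
  simp only [Fintype.sum_bool, if_true, if_false, Bool.false_eq_true, Int.natAbs_neg] at h
  convert h using 2
  · omega
  · constructor <;> intro <;> linarith

theorem FinState.trackVal_eq_mul_add (c t : ℕ) (x y : α → Bool) :
    FinState ((2 * (c + 1 + t) + 1) ^ 2) (fun u => trackVal x u = c * trackVal y u + t) := by
  have h_le := mul_trackVal_add_le c 1 t x y
  have h_ge := mul_trackVal_add_le 1 c (-t) y x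
  convert (h_le.and h_ge).mono (m' := (2 * (c + 1 + t) + 1) ^ 2) ?_ using 2
  · zify
    constructor
    · intro h; constructor <;> linarith
    · rintro ⟨h, h'⟩; linarith
  · simp [sq, add_comm 1 c]

theorem FinState.two_pow_length_le (x : α → Bool) :
    FinState 9 (fun u => 2 ^ u.length ≤ 2 * trackVal x u) := by
  have h : FinState 9 _ := mul_trackVal_add_le 1 2 1 x (fun _ => true)
  convert h using 2 with u
  have := trackVal_true u
  omega

end Linear

/-! ### Pumping -/

section Pumping

variable {α β : Type*}

theorem isPeriodicPt_iterate_of_card_le [Fintype β] (f : β → β) {N n : ℕ}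
    (hN : Fintype.card β ≤ N) (hn : N ≤ n) (b : β) :
    Function.IsPeriodicPt f N.factorial (f^[n] b) := by
  obtain ⟨i, j, hij, h_eq⟩ : ∃ i j : Fin (N + 1), i < j ∧ f^[i] b = f^[j] b := by
    obtain ⟨i, j, hne, h_eq⟩ := Fintype.exists_ne_map_eq_of_card_lt
      (fun i : Fin (N + 1) => f^[i] b) (by simpa using Nat.lt_succ_of_le hN)
    rcases lt_or_gt_of_ne hne with h | h
    exacts [⟨i, j, h, h_eq⟩, ⟨j, i, h, h_eq.symm⟩]
  have hij' : (i : ℕ) < j := hij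
  have h_period : Function.IsPeriodicPt f (j - i) (f^[i] b) := by
    rw [Function.IsPeriodicPt, Function.IsFixedPt, ← Function.iterate_add_apply,
      Nat.sub_add_cancel hij'.le, h_eq]
  have h_later := h_period.apply_iterate (n - i)
  rw [← Function.iterate_add_apply, Nat.sub_add_cancel (by omega)] at h_later
  exact h_later.trans_dvd (Nat.dvd_factorial (by omega) (by omega))

theorem iterate_eq_of_modEq_factorial [Fintype β] (f : β → β) {N n n' : ℕ}
    (hN : Fintype.card β ≤ N) (hn : N ≤ n) (hn' : N ≤ n') (h : n ≡ n' [MOD N.factorial]) (b : β) :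
    f^[n] b = f^[n'] b := by
  wlog hle : n ≤ n' generalizing n n'
  · exact (this hn' hn h.symm (le_of_not_ge hle)).symm
  have h_period := (isPeriodicPt_iterate_of_card_le f hN hn b).trans_dvd
    ((Nat.modEq_iff_dvd' hle).1 h)
  rw [Function.IsPeriodicPt, Function.IsFixedPt, ← Function.iterate_add_apply,
    Nat.sub_add_cancel hle] at h_period
  exact h_period.symm

/-- The states that the transition function `δ` reaches from `X` by one letter of the class `C`:
one step of the subset construction. -/
def succStates (δ : β → α → β) (C : α → Prop) (X : Set β) : Set β :=
  {t | ∃ s ∈ X, ∃ a, C a ∧ δ s a = t}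

theorem mem_iterate_succStates {δ : β → α → β} {C : α → Prop} {n : ℕ} {s t : β} :
    t ∈ (succStates δ C)^[n] {s} ↔
      ∃ v : List α, v.length = n ∧ (∀ a ∈ v, C a) ∧ v.foldl δ s = t := by
  induction n generalizing t with
  | zero =>
    simp only [Function.iterate_zero, id_eq, Set.mem_singleton_iff, List.length_eq_zero_iff]
    exact ⟨fun h => ⟨[], rfl, by simp, h.symm⟩, by rintro ⟨v, rfl, -, h⟩; exact h.symm⟩
  | succ n ih =>
    rw [Function.iterate_succ_apply']
    constructor
    · rintro ⟨r, hr, a, ha, rfl⟩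
      obtain ⟨v, rfl, hv, rfl⟩ := ih.1 hr
      refine ⟨v ++ [a], by simp, fun b hb => ?_, by simp⟩
      rcases List.mem_append.1 hb with hb | hb
      exacts [hv b hb, List.mem_singleton.1 hb ▸ ha]
    · rintro ⟨v, hlen, hv, rfl⟩
      rcases List.eq_nil_or_concat v with rfl | ⟨v, a, rfl⟩
      · simp at hlen
      · exact ⟨v.foldl δ s, ih.2 ⟨v, by simpa using hlen, fun b hb => hv b (by simp [hb]), rfl⟩,
          a, hv a (by simp), by simp⟩

/-- The sets of states reachable by `n` letters of the class `C` form an ultimately periodic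
sequence in `n`, since there are at most `2 ^ m` of them. -/
theorem FinState.exists_replace {m : ℕ} {g : List α → β} (h : FinState m g) {C : α → Prop}
    (u : List α) {v : List α} (hv : ∀ a ∈ v, C a) {n : ℕ} (hlen : 2 ^ m ≤ v.length) (hn : 2 ^ m ≤ n)
    (hmod : v.length ≡ n [MOD (2 ^ m).factorial]) :
    ∃ v' : List α, v'.length = n ∧ (∀ a ∈ v', C a) ∧
      ∀ z, g (u ++ (v' ++ z)) = g (u ++ (v ++ z)) := by
  classical
  obtain ⟨Q, _, δ, q₀, out, hm, hg⟩ := h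
  have h_card : Fintype.card (Set Q) ≤ 2 ^ m := by
    rw [Fintype.card_set]; exact Nat.pow_le_pow_right two_pos hm
  have h_reach : v.foldl δ (u.foldl δ q₀) ∈ (succStates δ C)^[v.length] {u.foldl δ q₀} :=
    mem_iterate_succStates.2 ⟨v, rfl, hv, rfl⟩
  rw [iterate_eq_of_modEq_factorial _ h_card hlen hn hmod] at h_reach
  obtain ⟨v', hlen', hC, h_end⟩ := mem_iterate_succStates.1 h_reach
  exact ⟨v', hlen', hC, fun z => by simp only [hg, List.foldl_append, h_end]⟩

theorem FinState.exists_replace_short {m : ℕ} {g : List α → β} (h : FinState m g) {C : α → Prop}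
    (u : List α) {v : List α} (hv : ∀ a ∈ v, C a) :
    ∃ v' : List α, v'.length ≤ 2 ^ m + (2 ^ m).factorial ∧ (∀ a ∈ v', C a) ∧
      ∀ z, g (u ++ (v' ++ z)) = g (u ++ (v ++ z)) := by
  rcases le_total v.length (2 ^ m) with hle | hle
  · exact ⟨v, hle.trans (Nat.le_add_right _ _), hv, fun _ => rfl⟩
  · have h_rem := Nat.mod_lt (v.length - 2 ^ m) (Nat.factorial_pos (2 ^ m))
    have hmod : v.length ≡ 2 ^ m + (v.length - 2 ^ m) % (2 ^ m).factorial
        [MOD (2 ^ m).factorial] := by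
      conv_lhs => rw [← Nat.add_sub_cancel' hle]
      exact (Nat.mod_modEq _ _).symm.add_left _
    obtain ⟨v', hlen, hC, h_eq⟩ := h.exists_replace u hv hle (Nat.le_add_right _ _) hmod
    exact ⟨v', by omega, hC, h_eq⟩

end Pumping

/-! ### Eliminating the exponential constraints -/

section Exponential

variable {α ι : Type*}

/-- The constraints `Yᵢ = 2 ^ Xᵢ` for `i ∈ S` between the numbers on the tracks `x i` and `y i`. -/
def ExpLinked (x y : ι → α → Bool) (S : Finset ι) (w : List α) : Prop :=
  ∀ i ∈ S, trackVal (y i) w = 2 ^ trackVal (x i) w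

/-- Every regular property with `m` states that has a solution satisfying the exponential
constraints `ExpLinked x y S` has one of length at most `L`. -/
def SmallWordBound (x y : ι → α → Bool) (S : Finset ι) (m L : ℕ) : Prop :=
  ∀ p : List α → Prop, FinState m p → ∀ w, p w → ExpLinked x y S w →
    ∃ w', p w' ∧ ExpLinked x y S w' ∧ w'.length ≤ L

/-- A bound on the states needed for the regular properties by which a constraint `Y = 2 ^ X` is
replaced in the presence of a property with `m` states. -/
def linkStates (m : ℕ) : ℕ := (2 ^ (2 ^ (2 ^ m + 2) + 3)) ^ 2

/-- The number of states of the property with one exponential constraint fewer to which a property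
with `m` states is reduced. The factor `((2 ^ m)!) ^ 3` pays for arithmetic modulo the period
`(2 ^ m)!` of the pumping lemma. -/
def elimStates (m : ℕ) : ℕ := m * (2 ^ m).factorial ^ 3 * linkStates m ^ 2

/-- A bound on the length of the shortest solution of a property with `m` states and `k`
exponential constraints. -/
def lengthBound : ℕ → ℕ → ℕ
  | 0, m => 2 ^ m + (2 ^ m).factorial
  | k + 1, m => 2 ^ lengthBound k (elimStates m) + (2 ^ m + (2 ^ m).factorial + 1)

variable {x y : ι → α → Bool} {S : Finset ι} {i j : ι} {m n L : ℕ} {p : List α → Prop}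
  {u w z : List α}

theorem ExpLinked.trackVal_lt_two_pow (hw : ExpLinked x y S w)
    (hlt : ∀ j ∈ S, trackVal (x j) w < n) (hj : j ∈ S) :
    trackVal (x j) w < 2 ^ n ∧ trackVal (y j) w < 2 ^ n :=
  ⟨(hlt j hj).trans Nat.lt_two_pow_self,
    hw j hj ▸ Nat.pow_lt_pow_right one_lt_two (hlt j hj)⟩

theorem ExpLinked.take (hw : ExpLinked x y S w) (hlt : ∀ j ∈ S, trackVal (x j) w < n) :
    ExpLinked x y S (w.take n) := fun j hj => by
  obtain ⟨hx, hy⟩ := hw.trackVal_lt_two_pow hlt hj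
  rw [trackVal_take_of_lt hx, trackVal_take_of_lt hy, hw j hj]

theorem SmallWordBound.empty : SmallWordBound x y ∅ m (lengthBound 0 m) := by
  intro p hp w hpw _
  obtain ⟨w', h_len, -, h_eq⟩ :=
    hp.exists_replace_short (C := fun _ => True) [] (v := w) (by simp)
  refine ⟨w', ?_, by simp [ExpLinked], h_len⟩
  simpa using (h_eq []).mpr (by simpa using hpw)

theorem FinState.linkStates_of_eq_mul_add {c t : ℕ} (h : c + t ≤ 2 ^ 2 ^ (2 ^ m + 2))
    (f g : α → Bool) : FinState (linkStates m) (fun u => trackVal f u = c * trackVal g u + t) := by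
  refine (FinState.trackVal_eq_mul_add c t f g).mono (Nat.pow_le_pow_left ?_ 2)
  have := Nat.one_le_two_pow (n := 2 ^ (2 ^ m + 2))
  rw [pow_add 2 _ 3]
  omega

theorem mul_add_one_le_linkStates {a : ℕ} (h : a ≤ 2 ^ 2 ^ (2 ^ m + 2)) :
    9 * (2 * a + 1) ≤ linkStates m := by
  have := Nat.one_le_two_pow (n := 2 ^ (2 ^ m + 2))
  rw [linkStates, pow_add 2 _ 3]
  nlinarith

theorem two_pow_le_two_mul_iff {k : ℕ} (hn : 0 < n) : 2 ^ k ≤ 2 * n ↔ k ≤ n.size := by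
  cases k with
  | zero => simp; omega
  | succ k => rw [pow_succ', Nat.succ_le_iff, Nat.lt_size, Nat.mul_le_mul_left_iff two_pos]

theorem size_add_le_of_two_pow_le {t : ℕ} (h : 2 ^ (t + 2) ≤ n) : n.size + t ≤ n := by
  have h_size : t + 2 < n.size := Nat.lt_size.2 h
  obtain ⟨k, hk⟩ := Nat.exists_eq_add_of_le' (show 2 ≤ n.size by omega)
  have h_pow : 2 ^ (k + 1) ≤ n := Nat.lt_size.1 (by omega)
  have h_lin : k + 1 ≤ 2 ^ k := Nat.lt_two_pow_self
  rw [pow_succ] at h_pow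
  omega

section Insert

variable [DecidableEq ι]

/-- A letter on which all tracks `x j` for `j ∈ insert i S` and `y j` for `j ∈ S` are `0`. -/
def IdleLetter (x y : ι → α → Bool) (S : Finset ι) (i : ι) (a : α) : Prop :=
  (∀ j ∈ insert i S, x j a = false) ∧ ∀ j ∈ S, y j a = false

/-- A continuation that leaves all tracks at `0` except for a single digit `1` of `y i`, at
position `n`. -/
def IsPowTail (x y : ι → α → Bool) (S : Finset ι) (i : ι) (n : ℕ) (z : List α) : Prop :=
  (∀ a ∈ z, IdleLetter x y S i a) ∧ trackVal (y i) z = 2 ^ n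

theorem expLinked_insert :
    ExpLinked x y (insert i S) w ↔ trackVal (y i) w = 2 ^ trackVal (x i) w ∧ ExpLinked x y S w :=
  Finset.forall_mem_insert _ _ _

theorem ExpLinked.append (hu : ExpLinked x y S u) (hu_pow : trackVal (y i) u = 0)
    (hz : IsPowTail x y S i n z) (hn : u.length + n = trackVal (x i) u) :
    ExpLinked x y (insert i S) (u ++ z) := by
  have hx (j) (hj : j ∈ insert i S) : trackVal (x j) (u ++ z) = trackVal (x j) u := by
    rw [trackVal_append, trackVal_eq_zero_iff.2 fun a ha => (hz.1 a ha).1 j hj, mul_zero, add_zero]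
  refine expLinked_insert.2 ⟨?_, fun j hj => ?_⟩
  · rw [hx i (Finset.mem_insert_self i S), trackVal_append, hu_pow, hz.2, ← hn, pow_add, zero_add]
  · rw [hx j (Finset.mem_insert_of_mem hj), trackVal_append,
      trackVal_eq_zero_iff.2 fun a ha => (hz.1 a ha).2 j hj, mul_zero, add_zero, hu j hj]

theorem ExpLinked.isPowTail_drop (hw : ExpLinked x y (insert i S) w)
    (hn : n ≤ trackVal (x i) w) (hX : trackVal (x i) w < 2 ^ n)
    (hlt : ∀ j ∈ S, trackVal (x j) w < n) :
    IsPowTail x y S i (trackVal (x i) w - n) (w.drop n) := by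
  obtain ⟨hwi, hwS⟩ := expLinked_insert.1 hw
  refine ⟨fun a ha => ⟨fun j hj => ?_, fun j hj => ?_⟩, ?_⟩
  · rcases Finset.mem_insert.1 hj with rfl | hj
    · exact trackVal_eq_zero_iff.1 (trackVal_drop_of_lt hX) a ha
    · exact trackVal_eq_zero_iff.1 (trackVal_drop_of_lt (hwS.trackVal_lt_two_pow hlt hj).1) a ha
  · exact trackVal_eq_zero_iff.1 (trackVal_drop_of_lt (hwS.trackVal_lt_two_pow hlt hj).2) a ha
  · rw [trackVal_drop, hwi, Nat.pow_div hn two_pos]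

/-- Pumping moves the digit `1` of the tail to any position in the same residue class. -/
theorem FinState.exists_isPowTail (hp : FinState m p) (hz : IsPowTail x y S i n z) {n' : ℕ}
    (hn : 2 ^ m ≤ n) (hn' : 2 ^ m ≤ n') (hmod : n ≡ n' [MOD (2 ^ m).factorial])
    (h : p (u ++ z)) :
    ∃ z', IsPowTail x y S i n' z' ∧ p (u ++ z') ∧
      z'.length ≤ n' + (2 ^ m + (2 ^ m).factorial + 1) := by
  obtain ⟨v, a, t, rfl, rfl, hv, ha, ht⟩ := trackVal_eq_two_pow_iff.1 hz.2
  let Blank (b : α) : Prop := IdleLetter x y S i b ∧ y i b = false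
  have hv_blank : ∀ b ∈ v, Blank b := fun b hb => ⟨hz.1 b (by simp [hb]), hv b hb⟩
  have ht_blank : ∀ b ∈ t, Blank b := fun b hb => ⟨hz.1 b (by simp [hb]), ht b hb⟩
  obtain ⟨v', rfl, hv', hpv⟩ := hp.exists_replace u hv_blank hn hn' hmod
  obtain ⟨t', ht_len, ht', hpt⟩ := hp.exists_replace_short (u ++ (v' ++ [a])) ht_blank
  refine ⟨v' ++ a :: t', ⟨fun b hb => ?_, ?_⟩, ?_, ?_⟩
  · rcases List.mem_append.1 hb with hb | hb
    · exact (hv' b hb).1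
    · rcases List.mem_cons.1 hb with rfl | hb
      exacts [hz.1 _ (by simp), (ht' b hb).1]
  · exact trackVal_eq_two_pow_iff.2
      ⟨v', a, t', rfl, rfl, fun b hb => (hv' b hb).2, ha, fun b hb => (ht' b hb).2⟩
  · have h_short := hpt []
    simp only [List.append_nil, List.append_assoc, List.singleton_append] at h_short
    rw [h_short, hpv]
    exact h
  · simp only [List.length_append, List.length_cons]
    omega

/-- A regular approximation of the extendability of `u` to a solution: the required number
`trackVal (x i) u - u.length` of letters between `u` and the digit `1` of `y i` is known only modulo
the pumping period. -/
def PumpExtends (x y : ι → α → Bool) (S : Finset ι) (i : ι) (m : ℕ) (p : List α → Prop)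
    (u : List α) : Prop :=
  ∃ n : ℕ, 2 ^ m ≤ n ∧ u.length + n ≡ trackVal (x i) u [MOD (2 ^ m).factorial] ∧
    ∃ z, IsPowTail x y S i n z ∧ p (u ++ z)

theorem FinState.pumpExtends (hp : FinState m p) :
    FinState (m * (2 ^ m).factorial ^ 3) (PumpExtends x y S i m p) := by
  have : NeZero (2 ^ m).factorial := ⟨Nat.factorial_ne_zero _⟩
  have h_val := FinState.binVal_of_fintype (fun a => ((x i a).toNat : ZMod (2 ^ m).factorial))
  have h_states := hp.residual.pair (h_val.pair (FinState.length_cast (ZMod (2 ^ m).factorial)))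
  have h_ext := h_states.comp fun q =>
    ∃ n : ℕ, 2 ^ m ≤ n ∧ q.2.2 + (n : ZMod (2 ^ m).factorial) = q.2.1 ∧
      ∃ z, IsPowTail x y S i n z ∧ q.1 z
  rw [ZMod.card, ← pow_two, ← pow_succ] at h_ext
  convert h_ext using 2 with u
  simp [PumpExtends, trackVal, binVal_natCast, ← ZMod.natCast_eq_natCast_iff]

theorem PumpExtends.exists_isPowTail (h : PumpExtends x y S i m p u) (hp : FinState m p)
    (hn : u.length + n = trackVal (x i) u) (hm : 2 ^ m ≤ n) :
    ∃ z, IsPowTail x y S i n z ∧ p (u ++ z) ∧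
      z.length ≤ n + (2 ^ m + (2 ^ m).factorial + 1) := by
  obtain ⟨n₀, hn₀, h_mod, z, hz, hpz⟩ := h
  refine hp.exists_isPowTail hz hn₀ hm ?_ hpz
  exact Nat.ModEq.add_left_cancel' _ (hn ▸ h_mod)

theorem PumpExtends.of_expLinked (hw : ExpLinked x y (insert i S) w) (hp : p w)
    (hn : n + 2 ^ m ≤ trackVal (x i) w) (hX : trackVal (x i) w < 2 ^ n)
    (hlt : ∀ j ∈ S, trackVal (x j) w < n) : PumpExtends x y S i m p (w.take n) := by
  have hn' : n ≤ trackVal (x i) w := (Nat.le_add_right _ _).trans hn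
  have h_len : n ≤ w.length := hn'.trans <| (Nat.pow_lt_pow_iff_right one_lt_two).1
    ((expLinked_insert.1 hw).1 ▸ trackVal_lt_two_pow (y i) w) |>.le
  refine ⟨trackVal (x i) w - n, by omega, ?_, w.drop n, hw.isPowTail_drop hn' hX hlt, ?_⟩
  · rw [List.length_take_of_le h_len, Nat.add_sub_cancel' hn',
      trackVal_take_of_lt hX]
  · rwa [List.take_append_drop]

section Elimination

variable (hS : SmallWordBound x y S (elimStates m) L) (hp : FinState m p)
  (hw : ExpLinked x y (insert i S) w) (hpw : p w)
include hS hp hw hpw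

theorem SmallWordBound.exists_of_regular {r : List α → Prop}
    (hr : FinState (linkStates m ^ 2) r) (hrw : r w)
    (h_link : ∀ u, ExpLinked x y S u → r u → trackVal (y i) u = 2 ^ trackVal (x i) u) :
    ∃ w', p w' ∧ ExpLinked x y (insert i S) w' ∧ w'.length ≤ L := by
  have h_states : m * linkStates m ^ 2 ≤ elimStates m :=
    Nat.mul_le_mul_right _ (Nat.le_mul_of_pos_right m (by positivity))
  obtain ⟨w', ⟨hpw', hrw'⟩, hw', h_len⟩ :=
    hS _ ((hp.and hr).mono h_states) w ⟨hpw, hrw⟩ (expLinked_insert.1 hw).2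
  exact ⟨w', hpw', expLinked_insert.2 ⟨h_link w' hw' hrw', hw'⟩, h_len⟩

theorem SmallWordBound.exists_of_lt (hX : trackVal (x i) w < 2 ^ (2 ^ m + 2)) :
    ∃ w', p w' ∧ ExpLinked x y (insert i S) w' ∧ w'.length ≤ L := by
  set X := trackVal (x i) w
  have h_pow : 2 ^ X ≤ 2 ^ 2 ^ (2 ^ m + 2) := Nat.pow_le_pow_right two_pos hX.le
  have hr := (FinState.linkStates_of_eq_mul_add (m := m) (c := 0) (t := X)
    (by have := X.lt_two_pow_self; omega) (x i) (x i)).and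
    (FinState.linkStates_of_eq_mul_add (m := m) (c := 0) (t := 2 ^ X) (by omega) (y i) (x i))
  simp only [zero_mul, zero_add, ← sq] at hr
  refine hS.exists_of_regular hp hw hpw hr ⟨rfl, (expLinked_insert.1 hw).1⟩ ?_
  rintro u - ⟨hxu, hyu⟩
  rw [hxu, hyu]

theorem SmallWordBound.exists_of_close (hj : j ∈ S) (hle : trackVal (x j) w ≤ trackVal (x i) w)
    (h_close : trackVal (x i) w ≤ trackVal (x j) w + 2 ^ m) :
    ∃ w', p w' ∧ ExpLinked x y (insert i S) w' ∧ w'.length ≤ L := by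
  obtain ⟨t, ht⟩ := Nat.exists_eq_add_of_le hle
  obtain ⟨hwi, hwS⟩ := expLinked_insert.1 hw
  have h_exp : 2 ^ m + 2 < 2 ^ (2 ^ m + 2) := Nat.lt_two_pow_self
  have h_pow : 2 ^ t ≤ 2 ^ 2 ^ (2 ^ m + 2) := Nat.pow_le_pow_right two_pos (by omega)
  have h_t : t + 1 ≤ 2 ^ t := Nat.lt_two_pow_self
  have hr := (FinState.linkStates_of_eq_mul_add (m := m) (c := 1) (t := t) (by omega)
    (x i) (x j)).and
    (FinState.linkStates_of_eq_mul_add (m := m) (c := 2 ^ t) (t := 0) (by omega) (y i) (y j))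
  simp only [one_mul, add_zero, ← sq] at hr
  refine hS.exists_of_regular hp hw hpw hr ⟨ht, ?_⟩ ?_
  · rw [hwi, ht, hwS j hj, pow_add, mul_comm]
  · rintro u hu ⟨hxu, hyu⟩
    rw [hxu, hyu, hu j hj, pow_add, mul_comm]

theorem SmallWordBound.exists_of_gap (hn : n + 2 ^ m ≤ trackVal (x i) w)
    (hX : trackVal (x i) w < 2 ^ n) (hlt : ∀ j ∈ S, trackVal (x j) w < n)
    {e : List α → Prop} (he : FinState (linkStates m) e) (hew : e (w.take n))
    (h_gap : ∀ u, ExpLinked x y S u → e u → u.length + 2 ^ m ≤ trackVal (x i) u) :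
    ∃ w', p w' ∧ ExpLinked x y (insert i S) w' ∧
      w'.length ≤ 2 ^ L + (2 ^ m + (2 ^ m).factorial + 1) := by
  obtain ⟨hwi, hwS⟩ := expLinked_insert.1 hw
  have h_zero : FinState (linkStates m) (fun u => trackVal (y i) u = 0) := by
    simpa using FinState.linkStates_of_eq_mul_add (c := 0) (t := 0) (by simp) (y i) (y i)
  have h_prefix : FinState (elimStates m)
      (fun u => PumpExtends x y S i m p u ∧ e u ∧ trackVal (y i) u = 0) := by
    simpa only [elimStates, sq] using hp.pumpExtends.and (he.and h_zero)
  have h_pow_take : trackVal (y i) (w.take n) = 0 := by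
    rw [trackVal_take, hwi,
      Nat.mod_eq_zero_of_dvd (Nat.pow_dvd_pow 2 ((Nat.le_add_right _ _).trans hn))]
  obtain ⟨u, ⟨h_ext, heu, h_pow⟩, hu, h_len⟩ := hS _ h_prefix (w.take n)
    ⟨.of_expLinked hw hpw hn hX hlt, hew, h_pow_take⟩ (hwS.take hlt)
  obtain ⟨k, hk⟩ := Nat.exists_eq_add_of_le (h_gap u hu heu)
  obtain ⟨z, hz, hpz, hz_len⟩ := h_ext.exists_isPowTail hp (n := 2 ^ m + k)
    (by omega) (by omega)
  refine ⟨u ++ z, hpz, hu.append h_pow hz (by omega), ?_⟩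
  have h_val := (trackVal_lt_two_pow (x i) u).trans_le (Nat.pow_le_pow_right two_pos h_len)
  rw [List.length_append]
  omega

/-- The prefix up to the digit `1` of the largest other power `Yⱼ` determines the value of `Xᵢ`. -/
theorem SmallWordBound.exists_of_size_le (hj : j ∈ S)
    (h_max : ∀ k ∈ S, trackVal (x k) w ≤ trackVal (x j) w)
    (h_size : (trackVal (x i) w).size ≤ trackVal (x j) w)
    (h_far : trackVal (x j) w + 2 ^ m < trackVal (x i) w) :
    ∃ w', p w' ∧ ExpLinked x y (insert i S) w' ∧
      w'.length ≤ 2 ^ L + (2 ^ m + (2 ^ m).factorial + 1) := by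
  have hwS := (expLinked_insert.1 hw).2
  have hlt : ∀ k ∈ S, trackVal (x k) w < trackVal (x j) w + 1 :=
    fun k hk => Nat.lt_succ_of_le (h_max k hk)
  have hX : trackVal (x i) w < 2 ^ (trackVal (x j) w + 1) :=
    Nat.size_le.1 (h_size.trans (Nat.le_succ _))
  have he := (FinState.two_pow_length_le (y j)).and
    (FinState.mul_trackVal_add_le 1 1 (2 ^ m + 1 : ℕ) (x i) (x j))
  have h_take := hwS.take hlt
  refine hS.exists_of_gap hp hw hpw (n := trackVal (x j) w + 1) (by omega) hX hlt (he.mono ?_)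
    ⟨?_, ?_⟩ ?_
  · have h_exp : 2 ^ m + 2 < 2 ^ (2 ^ m + 2) := Nat.lt_two_pow_self
    have := Nat.lt_two_pow_self (n := 2 ^ (2 ^ m + 2))
    exact mul_add_one_le_linkStates (by simp only [Int.natAbs_one, Int.natAbs_natCast]; omega)
  · rw [h_take j hj, trackVal_take_of_lt (hwS.trackVal_lt_two_pow hlt hj).1, mul_comm, ← pow_succ]
    exact Nat.pow_le_pow_right two_pos (List.length_take_le _ _)
  · rw [trackVal_take_of_lt hX, trackVal_take_of_lt (hwS.trackVal_lt_two_pow hlt hj).1]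
    omega
  · rintro u hu ⟨h_len, h_far⟩
    rw [hu j hj, mul_comm, ← pow_succ, Nat.pow_le_pow_iff_right one_lt_two] at h_len
    omega

theorem SmallWordBound.exists_of_lt_size (h_size : ∀ j ∈ S,
    trackVal (x j) w < (trackVal (x i) w).size) (hX : 2 ^ (2 ^ m + 2) ≤ trackVal (x i) w) :
    ∃ w', p w' ∧ ExpLinked x y (insert i S) w' ∧
      w'.length ≤ 2 ^ L + (2 ^ m + (2 ^ m).factorial + 1) := by
  have he := (FinState.two_pow_length_le (x i)).and
    (FinState.mul_trackVal_add_le 0 1 (2 ^ (2 ^ m + 2) : ℕ) (x i) (x i))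
  refine hS.exists_of_gap hp hw hpw (size_add_le_of_two_pow_le hX) (Nat.lt_size_self _) h_size
    (he.mono ?_) ⟨?_, ?_⟩ ?_
  · have := Nat.lt_two_pow_self (n := 2 ^ (2 ^ m + 2))
    exact mul_add_one_le_linkStates
      (by simp only [Int.natAbs_zero, Int.natAbs_one, Int.natAbs_natCast]; omega)
  · rw [trackVal_take_of_lt (Nat.lt_size_self _)]
    exact (two_pow_le_two_mul_iff (Nat.two_pow_pos _ |>.trans_le hX)).2 (List.length_take_le _ _)
  · rw [trackVal_take_of_lt (Nat.lt_size_self _)]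
    omega
  · rintro u - ⟨h_len, hXu⟩
    replace hXu : 2 ^ (2 ^ m + 2) ≤ trackVal (x i) u := by omega
    have h_len' := (two_pow_le_two_mul_iff (Nat.two_pow_pos _ |>.trans_le hXu)).1 h_len
    exact (Nat.add_le_add_right h_len' _).trans (size_add_le_of_two_pow_le hXu)

end Elimination

theorem SmallWordBound.exists_of_max (hS : SmallWordBound x y S (elimStates m) L)
    (hp : FinState m p) (hw : ExpLinked x y (insert i S) w) (hpw : p w)
    (h_max : ∀ j ∈ S, trackVal (x j) w ≤ trackVal (x i) w) :
    ∃ w', p w' ∧ ExpLinked x y (insert i S) w' ∧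
      w'.length ≤ 2 ^ L + (2 ^ m + (2 ^ m).factorial + 1) := by
  have h_len : L ≤ 2 ^ L + (2 ^ m + (2 ^ m).factorial + 1) :=
    Nat.lt_two_pow_self.le.trans (Nat.le_add_right _ _)
  rcases lt_or_ge (trackVal (x i) w) (2 ^ (2 ^ m + 2)) with h_small | h_large
  · obtain ⟨w', hpw', hw', h⟩ := hS.exists_of_lt hp hw hpw h_small
    exact ⟨w', hpw', hw', h.trans h_len⟩
  by_cases h_close : ∃ j ∈ S, trackVal (x i) w ≤ trackVal (x j) w + 2 ^ m
  · obtain ⟨j, hj, h_close⟩ := h_close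
    obtain ⟨w', hpw', hw', h⟩ := hS.exists_of_close hp hw hpw hj (h_max j hj) h_close
    exact ⟨w', hpw', hw', h.trans h_len⟩
  push Not at h_close
  by_cases h_size : ∀ j ∈ S, trackVal (x j) w < (trackVal (x i) w).size
  · exact hS.exists_of_lt_size hp hw hpw h_size h_large
  push Not at h_size
  obtain ⟨k, hk, h_size⟩ := h_size
  obtain ⟨j, hj, hj_max⟩ := S.exists_max_image (fun j => trackVal (x j) w) ⟨k, hk⟩
  exact hS.exists_of_size_le hp hw hpw hj hj_max (h_size.trans (hj_max k hk)) (h_close j hj)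

end Insert

theorem smallWordBound_lengthBound (x y : ι → α → Bool) (S : Finset ι) (m : ℕ) :
    SmallWordBound x y S m (lengthBound S.card m) := by
  classical
  induction hk : S.card generalizing S m with
  | zero => rw [Finset.card_eq_zero.1 hk]; exact .empty
  | succ k ih =>
    intro p hp w hpw hw
    obtain ⟨i, hi, h_max⟩ := S.exists_max_image (fun j => trackVal (x j) w)
      (Finset.card_pos.1 (by omega))
    have h_erase : SmallWordBound x y (S.erase i) (elimStates m) (lengthBound k (elimStates m)) :=
      ih _ _ (by rw [Finset.card_erase_of_mem hi, hk, Nat.add_sub_cancel])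
    rw [← Finset.insert_erase hi] at hw ⊢
    exact h_erase.exists_of_max hp hw hpw fun j hj => h_max j (Finset.mem_of_mem_erase hj)

end Exponential

/-! ### Bit strings -/

@[simp] theorem strVal_append_singleton (s : List Bool) (b : Bool) :
    strVal (s ++ [b]) = 2 * strVal s + b.toNat := by
  simp [strVal]

theorem strVal_reverse_map {α : Type*} (f : α → Bool) (u : List α) :
    strVal (u.map f).reverse = trackVal f u := by
  induction u with
  | nil => rfl
  | cons a u ih => simp [ih, add_comm]

theorem strVal_lt_two_pow (s : List Bool) : strVal s < 2 ^ s.length := by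
  simpa [← strVal_reverse_map] using trackVal_lt_two_pow id s.reverse

/-- The bit string of length `n` that denotes `v % 2 ^ n`. -/
def bitString (n v : ℕ) : List Bool := ((List.range n).map v.testBit).reverse

theorem map_testBit_trackVal {α : Type*} (f : α → Bool) (u : List α) :
    (List.range u.length).map (trackVal f u).testBit = u.map f := by
  induction u with
  | nil => rfl
  | cons a u ih =>
    have h_div : (trackVal f (a :: u)) / 2 = trackVal f u := by
      have := (f a).toNat_lt
      rw [trackVal_cons]
      omega
    have h_head : (trackVal f (a :: u)).testBit 0 = f a := by
      rw [Nat.testBit_zero, trackVal_cons]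
      cases f a <;> simp
    rw [List.length_cons, List.range_succ_eq_map, List.map_cons, List.map_map, List.map_cons,
      ← ih, h_head]
    simp only [Function.comp_def, Nat.testBit_succ, h_div]

theorem bitString_strVal (s : List Bool) : bitString s.length (strVal s) = s := by
  have h := map_testBit_trackVal id s.reverse
  rw [← strVal_reverse_map, List.map_id, List.reverse_reverse, List.length_reverse] at h
  rw [bitString, h, List.reverse_reverse]

theorem eq_of_strVal_eq {s t : List Bool} (h_len : s.length = t.length)
    (h_val : strVal s = strVal t) : s = t := by
  rw [← bitString_strVal s, h_len, h_val, bitString_strVal]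

theorem trackVal_testBit_range (v n : ℕ) :
    trackVal v.testBit (List.range n) = v % 2 ^ n := by
  induction n with
  | zero => simp [Nat.mod_one]
  | succ n ih =>
    rw [List.range_succ, trackVal_append, ih, List.length_range, Nat.mod_pow_succ,
      ← Nat.toNat_testBit]
    simp

/-! ### Assignments as words -/

/-- The four kinds of tracks of the word encoding an assignment: the value `⟦s⟧`, the power
`2 ^ len(s)` and the length `len(s)` of a string variable `s`, and an integer variable. -/
inductive Track where
  | value
  | pow
  | length
  | int
  deriving DecidableEq

instance : Fintype Track := ⟨{.value, .pow, .length, .int}, by rintro (_ | _ | _ | _) <;> simp⟩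

/-- A letter carries one bit for every kind of track and every variable. -/
abbrev Letter : Type := Track → ℕ → Bool

/-- The number written by the word `w` on the track of kind `t` of the variable `i`. -/
def trackNum (t : Track) (i : ℕ) (w : List Letter) : ℕ := trackVal (fun a => a t i) w

/-- The number that has to be written on the track of kind `t` of the variable `i` in order to
encode the assignment `I`, `ν`. -/
def Track.content (I : ℕ → List Bool) (ν : ℕ → ℕ) : Track → ℕ → ℕ
  | value, s => strVal (I s)
  | pow, s => 2 ^ (I s).length
  | length, s => (I s).length
  | int, x => ν x

/-- The word `w` encodes the restriction of the assignment `I`, `ν` to the variables up to `n`. -/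
def Encodes (w : List Letter) (I : ℕ → List Bool) (ν : ℕ → ℕ) (n : ℕ) : Prop :=
  ∀ t, ∀ i ≤ n, trackNum t i w = t.content I ν i

/-- The string whose value track is cut off at the first digit `1` of its power track. -/
def decodeStr (s : ℕ) (w : List Letter) : List Bool :=
  ((w.takeWhile fun a => !a .pow s).map fun a => a .value s).reverse

section Words

variable {w : List Letter} {I : ℕ → List Bool} {ν : ℕ → ℕ} {s n : ℕ}

theorem exists_encodes (I : ℕ → List Bool) (ν : ℕ → ℕ) (n : ℕ) : ∃ w, Encodes w I ν n := by
  obtain ⟨N, hN⟩ := ((Finset.univ ×ˢ Finset.range (n + 1)).image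
    fun p : Track × ℕ => p.1.content I ν p.2).exists_le
  refine ⟨(List.range N).map fun k t i => (t.content I ν i).testBit k, fun t i hi => ?_⟩
  have h_lt : t.content I ν i < 2 ^ N := (hN _ (Finset.mem_image.2
    ⟨(t, i), by simpa using Nat.lt_succ_of_le hi, rfl⟩)).trans_lt Nat.lt_two_pow_self
  rw [trackNum, trackVal_map, ← Nat.mod_eq_of_lt h_lt]
  exact (trackVal_testBit_range _ _).trans (by rw [Nat.mod_eq_of_lt h_lt])

theorem takeWhile_pow_eq_take (h : trackNum .pow s w = 2 ^ n) :
    (w.takeWhile fun a => !a .pow s) = w.take n ∧ n ≤ w.length := by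
  obtain ⟨v, a, v', rfl, rfl, hv, ha, -⟩ := trackVal_eq_two_pow_iff.1 h
  constructor
  · rw [List.takeWhile_append_of_pos (by simpa using hv),
      List.takeWhile_cons_of_neg (by simp [ha])]
    simp
  · simp

theorem length_decodeStr (h : trackNum .pow s w = 2 ^ n) : (decodeStr s w).length = n := by
  obtain ⟨h_take, h_le⟩ := takeWhile_pow_eq_take h
  simp [decodeStr, h_take, h_le]

theorem strVal_decodeStr (h : trackNum .pow s w = 2 ^ n) :
    strVal (decodeStr s w) = trackNum .value s w % 2 ^ n := by
  rw [decodeStr, (takeWhile_pow_eq_take h).1, strVal_reverse_map, trackVal_take, trackNum]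

theorem length_decodeStr_le (s : ℕ) (w : List Letter) : (decodeStr s w).length ≤ w.length := by
  simpa [decodeStr] using (List.takeWhile_prefix _).length_le

theorem Encodes.decodeStr_eq (h : Encodes w I ν n) (hs : s ≤ n) : decodeStr s w = I s := by
  have h_pow : trackNum .pow s w = 2 ^ (I s).length := h .pow s hs
  refine eq_of_strVal_eq (length_decodeStr h_pow) ?_
  rw [strVal_decodeStr h_pow, h .value s hs, Track.content, Nat.mod_eq_of_lt (strVal_lt_two_pow _)]

theorem Encodes.mono {m : ℕ} (h : Encodes w I ν n) (hm : m ≤ n) : Encodes w I ν m :=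
  fun t i hi => h t i (hi.trans hm)

theorem Encodes.expLinked (h : Encodes w I ν n) :
    ExpLinked (fun i a => a .length i) (fun i a => a .pow i) (Finset.range (n + 1)) w := by
  intro i hi
  have hi : i ≤ n := Finset.mem_range_succ_iff.1 hi
  exact (h .pow i hi).trans (congrArg (2 ^ ·) (h .length i hi).symm)

theorem Encodes.value_lt_pow (h : Encodes w I ν n) (hs : s ≤ n) :
    trackNum .value s w < trackNum .pow s w := by
  rw [h .value s hs, h .pow s hs]
  exact strVal_lt_two_pow _

theorem encodes_decodeStr (h_pow : ∀ s ≤ n, trackNum .pow s w = 2 ^ trackNum .length s w)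
    (h_lt : ∀ s ≤ n, trackNum .value s w < trackNum .pow s w)
    (hI : ∀ s ≤ n, I s = decodeStr s w) (hν : ∀ x ≤ n, ν x = trackNum .int x w) :
    Encodes w I ν n := by
  intro t i hi
  have h := h_pow i hi
  have h_len : (I i).length = trackNum .length i w := by rw [hI i hi, length_decodeStr h]
  cases t with
  | value =>
    rw [Track.content, hI i hi, strVal_decodeStr h, Nat.mod_eq_of_lt (h ▸ h_lt i hi)]
  | pow => rw [Track.content, h_len, h]
  | length => rw [Track.content, h_len]
  | int => rw [Track.content, hν i hi]

theorem Encodes.eq_iff {t : ℕ} (h : Encodes w I ν n) (hs : s ≤ n) (ht : t ≤ n) :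
    (trackNum .value s w = trackNum .value t w ∧ trackNum .length s w = trackNum .length t w) ↔
      I s = I t := by
  rw [h .value s hs, h .value t ht, h .length s hs, h .length t ht]
  exact ⟨fun h => eq_of_strVal_eq h.2 h.1, fun h => by simp only [Track.content, h, and_self]⟩

end Words

/-! ### Size of Gödel encodings -/

theorem natAbs_le_encode (z : ℤ) : z.natAbs ≤ Encodable.encode z := by
  rcases z with n | n
  · change n ≤ 2 * n; omega
  · change n + 1 ≤ 2 * n + 1; omega

theorem encode_le_encode_of_mem {α : Type*} [Encodable α] {a : α} {l : List α} (h : a ∈ l) :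
    Encodable.encode a ≤ Encodable.encode l := by
  induction l with
  | nil => simp at h
  | cons b l ih =>
    have := Nat.left_le_pair (Encodable.encode b) (Encodable.encode l)
    have := Nat.right_le_pair (Encodable.encode b) (Encodable.encode l)
    rw [Encodable.encode_list_cons]
    rcases List.mem_cons.1 h with rfl | h
    · omega
    · have := ih h; omega

theorem sum_natAbs_getD_le_encode (c : List ℤ) :
    ∑ i ∈ Finset.range c.length, (c.getD i 0).natAbs ≤ Encodable.encode c := by
  induction c with
  | nil => simp
  | cons z c ih =>
    have h_head := natAbs_le_encode z
    have := Nat.add_le_pair (Encodable.encode z) (Encodable.encode c)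
    simp only [List.length_cons, Finset.sum_range_succ', List.getD_cons_succ, List.getD_cons_zero,
      Encodable.encode_list_cons]
    omega

theorem RawDFA2.start_le_enc (D : RawDFA2) : D.start ≤ D.enc :=
  (Nat.left_le_pair _ _).trans ((Nat.right_le_pair _ _).trans (Nat.right_le_pair _ _))

theorem RawDFA2.step_le_enc (D : RawDFA2) (q : ℕ) (b : Bool) : D.step q b ≤ D.enc := by
  have h_trans : Encodable.encode D.trans ≤ D.enc :=
    (Nat.left_le_pair _ _).trans (Nat.right_le_pair _ _)
  rw [RawDFA2.step, List.getD_eq_getElem?_getD]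
  cases h : D.trans[2 * q + b.toNat]? with
  | none => simp
  | some r => exact (encode_le_encode_of_mem (List.mem_of_getElem? h)).trans h_trans

theorem RawDFA2.run_append_singleton (D : RawDFA2) (w : List Bool) (b : Bool) :
    D.run (w ++ [b]) = D.step (D.run w) b := by
  simp [RawDFA2.run]

theorem RawDFA2.run_le_enc (D : RawDFA2) (w : List Bool) : D.run w ≤ D.enc := by
  induction w using List.reverseRecOn with
  | nil => exact D.start_le_enc
  | append_singleton w b _ => rw [D.run_append_singleton]; exact D.step_le_enc _ _

/-! ### Atoms as regular properties -/

namespace TFml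

/-- Satisfaction of a formula read off the tracks of the word that encodes an assignment. -/
def TrackSat (w : List Letter) : TFml → Prop
  | reg D s => D.Accepts (decodeStr s w)
  | eq s t => trackNum .value s w = trackNum .value t w ∧
      trackNum .length s w = trackNum .length t w
  | ne s t => ¬(trackNum .value s w = trackNum .value t w ∧
      trackNum .length s w = trackNum .length t w)
  | len s x => trackNum .length s w = trackNum .int x w
  | num s x => trackNum .value s w = trackNum .int x w
  | lin c b => b ≤ ∑ i ∈ Finset.range c.length, c.getD i 0 * (trackNum .int i w : ℤ)
  | and φ ψ => φ.TrackSat w ∧ ψ.TrackSat w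
  | or φ ψ => φ.TrackSat w ∨ ψ.TrackSat w

/-- A bound on the number of states of the automaton for a formula with Gödel number `n`. -/
def stateBound (n : ℕ) : ℕ := (n + 6) ^ (n + 6)

theorem stateBound_mul_le {t a b : ℕ} (ht : 6 ≤ t) :
    stateBound a * stateBound b ≤ stateBound (Nat.pair t (Nat.pair a b)) := by
  have := Nat.add_le_pair t (Nat.pair a b)
  have := Nat.add_le_pair a b
  calc (a + 6) ^ (a + 6) * (b + 6) ^ (b + 6)
      ≤ (a + b + 12) ^ (a + 6) * (a + b + 12) ^ (b + 6) := by gcongr <;> omega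
    _ = (a + b + 12) ^ (a + b + 12) := by ring
    _ ≤ _ := Nat.pow_self_mono (by omega)

theorem le_stateBound_of_le {m n : ℕ} (h : m ≤ (n + 6) ^ 6) : m ≤ stateBound n :=
  h.trans (Nat.pow_le_pow_right (by omega) (by omega))

theorem finState_accepts_decodeStr (D : RawDFA2) (s : ℕ) :
    FinState ((D.enc + 1) ^ (D.enc + 1) * 2) (fun w => D.Accepts (decodeStr s w)) := by
  have h_run : FinState (D.enc + 1)
      (fun u => (⟨D.run u, Nat.lt_succ_of_le (D.run_le_enc u)⟩ : Fin (D.enc + 1))) :=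
    FinState.of_card_le (by simp) (fun q b => ⟨D.step q b, Nat.lt_succ_of_le (D.step_le_enc q b)⟩)
      fun u b => Fin.ext (D.run_append_singleton u b)
  exact ((h_run.comp fun q => (q : ℕ) ∈ D.accept).reverse.map _).takeWhile _

theorem finState_trackNum_eq (t t' : Track) (i j : ℕ) :
    FinState 25 (fun w => trackNum t i w = trackNum t' j w) := by
  have h : FinState 25 _ :=
    FinState.trackVal_eq_mul_add 1 0 (fun a : Letter => a t i) (fun a => a t' j)
  simpa only [one_mul, add_zero, trackNum] using h

theorem finState_value_lt_pow (s : ℕ) :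
    FinState 7 (fun w => trackNum .value s w < trackNum .pow s w) := by
  have h : FinState 7 _ :=
    FinState.mul_trackVal_add_le 1 1 1 (fun a : Letter => a .pow s) (fun a => a .value s)
  convert h using 2 with w
  simp only [trackNum]
  omega

theorem finState_trackSat_reg (D : RawDFA2) (s : ℕ) :
    FinState (stateBound (reg D s).enc) (fun w => (reg D s).TrackSat w) := by
  refine (finState_accepts_decodeStr D s).mono ?_
  have := Nat.add_le_pair 0 (Nat.pair D.enc s)
  have := Nat.add_le_pair D.enc s
  calc (D.enc + 1) ^ (D.enc + 1) * 2 ≤ (D.enc + 6) ^ (D.enc + 1) * (D.enc + 6) ^ 5 := by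
        gcongr
        · omega
        · exact (by norm_num : 2 ≤ 6 ^ 5).trans (Nat.pow_le_pow_left (by omega) 5)
    _ = (D.enc + 6) ^ (D.enc + 6) := by rw [← pow_add]
    _ ≤ _ := Nat.pow_self_mono (by rw [enc]; omega)

theorem finState_trackSat_lin (c : List ℤ) (b : ℤ) :
    FinState (stateBound (lin c b).enc) (fun w => (lin c b).TrackSat w) := by
  refine (FinState.le_sum_mul_trackVal _ _ _ b).mono (le_stateBound_of_le ?_)
  have := sum_natAbs_getD_le_encode c
  have := natAbs_le_encode b
  have := Nat.add_le_pair (Encodable.encode c) (Encodable.encode b)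
  have := Nat.right_le_pair 5 (Nat.pair (Encodable.encode c) (Encodable.encode b))
  calc 2 * (∑ i ∈ Finset.range c.length, (c.getD i 0).natAbs + b.natAbs) + 1
      ≤ 2 * (lin c b).enc + 1 := by rw [enc, Encodable.encode_prod_val]; omega
    _ ≤ ((lin c b).enc + 6) ^ 2 := by nlinarith
    _ ≤ _ := Nat.pow_le_pow_right (by omega) (by norm_num)

theorem finState_trackSat (φ : TFml) : FinState (stateBound φ.enc) (fun w => φ.TrackSat w) := by
  have h_atom {n : ℕ} : 625 ≤ stateBound n :=
    le_stateBound_of_le ((by norm_num : 625 ≤ 6 ^ 6).trans (Nat.pow_le_pow_left (by omega) 6))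
  have h_str (s t : ℕ) := (finState_trackNum_eq .value .value s t).and
    (finState_trackNum_eq .length .length s t)
  induction φ with
  | reg D s => exact finState_trackSat_reg D s
  | eq s t => exact (h_str s t).mono h_atom
  | ne s t => exact ((h_str s t).comp Not).mono h_atom
  | len s x => exact (finState_trackNum_eq ..).mono (h_atom.trans' (by norm_num))
  | num s x => exact (finState_trackNum_eq ..).mono (h_atom.trans' (by norm_num))
  | lin c b => exact finState_trackSat_lin c b
  | and φ ψ hφ hψ => exact (hφ.and hψ).mono (stateBound_mul_le le_rfl)
  | or φ ψ hφ hψ => exact (hφ.or hψ).mono (stateBound_mul_le (by norm_num))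

theorem trackSat_iff {w : List Letter} {I : ℕ → List Bool} {ν : ℕ → ℕ} {φ : TFml}
    (h : Encodes w I ν φ.enc) : φ.TrackSat w ↔ φ.Sat I ν := by
  have h_bound (t a b : ℕ) : a ≤ Nat.pair t (Nat.pair a b) ∧ b ≤ Nat.pair t (Nat.pair a b) :=
    ⟨(Nat.left_le_pair a b).trans (Nat.right_le_pair _ _),
      (Nat.right_le_pair a b).trans (Nat.right_le_pair _ _)⟩
  induction φ with
  | reg D s => rw [TrackSat, Sat, h.decodeStr_eq (h_bound ..).2]
  | eq s t => exact h.eq_iff (h_bound ..).1 (h_bound ..).2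
  | ne s t => exact (h.eq_iff (h_bound ..).1 (h_bound ..).2).not
  | len s x => rw [TrackSat, Sat, h .length s (h_bound ..).1, h .int x (h_bound ..).2]; rfl
  | num s x => rw [TrackSat, Sat, h .value s (h_bound ..).1, h .int x (h_bound ..).2]; rfl
  | lin c b =>
    have h_int (i : ℕ) (hi : i ∈ Finset.range c.length) : trackNum .int i w = ν i :=
      h .int i ((Finset.mem_range.1 hi).le.trans
        ((Encodable.length_le_encode c).trans (h_bound 5 _ (Encodable.encode b)).1))
    rw [TrackSat, Sat, Finset.sum_congr rfl fun i hi => by rw [h_int i hi]]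
  | and φ ψ hφ hψ =>
    exact and_congr (hφ (h.mono (h_bound ..).1)) (hψ (h.mono (h_bound ..).2))
  | or φ ψ hφ hψ =>
    exact or_congr (hφ (h.mono (h_bound ..).1)) (hψ (h.mono (h_bound ..).2))

/-! ### Small models -/

/-- A bound on the length of the strings in a smallest satisfying assignment of a formula with
Gödel number `n`. The factor `7 ^ (n + 1)` is the cost of checking `⟦s⟧ < 2 ^ len(s)` for all
string variables. -/
def wordBound (n : ℕ) : ℕ := lengthBound (n + 1) (stateBound n * 7 ^ (n + 1))

theorem Sat.exists_word {φ : TFml} {I : ℕ → List Bool} {ν : ℕ → ℕ} (h : φ.Sat I ν) :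
    ∃ w, φ.TrackSat w ∧ w.length ≤ wordBound φ.enc ∧
      (∀ s ≤ φ.enc, trackNum .pow s w = 2 ^ trackNum .length s w) ∧
      ∀ s ≤ φ.enc, trackNum .value s w < trackNum .pow s w := by
  obtain ⟨w, hw⟩ := exists_encodes I ν φ.enc
  obtain ⟨w', ⟨h_sat, h_value⟩, h_linked, h_len⟩ := smallWordBound_lengthBound
    (fun i (a : Letter) => a .length i) (fun i a => a .pow i) (Finset.range (φ.enc + 1)) _
    _ (φ.finState_trackSat.and (FinState.forall_lt finState_value_lt_pow (φ.enc + 1))) w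
    ⟨(trackSat_iff hw).2 h, fun s hs => hw.value_lt_pow (Nat.le_of_lt_succ hs)⟩ hw.expLinked
  rw [Finset.card_range] at h_len
  exact ⟨w', h_sat, h_len, fun s hs => h_linked s (Finset.mem_range_succ_iff.2 hs),
    fun s hs => h_value s (Nat.lt_succ_of_le hs)⟩

theorem Sat.exists_small {φ : TFml} {I : ℕ → List Bool} {ν : ℕ → ℕ} (h : φ.Sat I ν) :
    ∃ I' ν', φ.Sat I' ν' ∧
      (∀ i, (I' i).length ≤ wordBound φ.enc ∧ ν' i < 2 ^ wordBound φ.enc) ∧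
      ∀ i > φ.enc, I' i = [] ∧ ν' i = 0 := by
  obtain ⟨w, h_sat, h_len, h_pow, h_value⟩ := h.exists_word
  refine ⟨fun s => if s ≤ φ.enc then decodeStr s w else [],
    fun x => if x ≤ φ.enc then trackNum .int x w else 0, ?_, fun i => ⟨?_, ?_⟩, fun i hi => ?_⟩
  · exact (trackSat_iff (encodes_decodeStr h_pow h_value (fun s hs => if_pos hs)
      fun x hx => if_pos hx)).1 h_sat
  · dsimp only
    split_ifs
    · exact (length_decodeStr_le i w).trans h_len
    · exact Nat.zero_le _
  · dsimp only
    split_ifs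
    · exact (trackVal_lt_two_pow _ w).trans_le (Nat.pow_le_pow_right two_pos h_len)
    · positivity
  · simp [hi.not_ge]

end TFml

/-! ### Primitive recursive functions -/

section Primrec

variable {γ : Type*} [Primcodable γ]

theorem primrec₂_pow : Primrec₂ ((· ^ ·) : ℕ → ℕ → ℕ) :=
  Primrec₂.unpaired'.1 Nat.Primrec.pow

theorem primrec_factorial : Primrec Nat.factorial :=
  (Primrec.nat_rec₁ 1 (Primrec.nat_mul.comp (Primrec.succ.comp Primrec.fst)
    Primrec.snd).to₂).of_eq fun n => by
      induction n with
      | zero => rfl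
      | succ n ih => rw [Nat.factorial_succ, ← ih]

theorem primrec_sum_range {n : γ → ℕ} {f : γ → ℕ → ℕ} (hn : Primrec n) (hf : Primrec₂ f) :
    Primrec fun x => ∑ i ∈ Finset.range (n x), f x i := by
  have h_step : Primrec₂ fun (x : γ) (p : ℕ × ℕ) => p.2 + f x p.1 :=
    (Primrec.nat_add.comp (Primrec.snd.comp Primrec.snd)
      (hf.comp Primrec.fst (Primrec.fst.comp Primrec.snd))).to₂
  refine (Primrec.nat_rec' hn (Primrec.const 0) h_step).of_eq fun x => ?_
  induction n x with
  | zero => rfl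
  | succ n ih => rw [Finset.sum_range_succ, ← ih]

theorem primrec_toNat : Primrec Int.toNat := by
  have h_half : Primrec fun n : ℕ => if n % 2 = 0 then n / 2 else 0 :=
    .ite (Primrec.eq.comp (Primrec.nat_mod.comp .id (.const 2)) (.const 0))
      (Primrec.nat_div.comp .id (.const 2)) (.const 0)
  refine (h_half.comp Primrec.encode).of_eq fun z => ?_
  rcases z with n | n
  · change (if 2 * n % 2 = 0 then 2 * n / 2 else 0) = n
    rw [if_pos (by omega)]; omega
  · change (if (2 * n + 1) % 2 = 0 then (2 * n + 1) / 2 else 0) = 0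
    rw [if_neg (by omega)]

theorem primrec_toNat_neg : Primrec fun z : ℤ => (-z).toNat := by
  have h_half : Primrec fun n : ℕ => if n % 2 = 0 then 0 else (n + 1) / 2 :=
    .ite (Primrec.eq.comp (Primrec.nat_mod.comp .id (.const 2)) (.const 0))
      (.const 0) (Primrec.nat_div.comp .succ (.const 2))
  refine (h_half.comp Primrec.encode).of_eq fun z => ?_
  rcases z with n | n
  · change (if 2 * n % 2 = 0 then 0 else (2 * n + 1) / 2) = (-(n : ℤ)).toNat
    rw [if_pos (by omega)]; omega
  · change (if (2 * n + 1) % 2 = 0 then 0 else (2 * n + 1 + 1) / 2) = n + 1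
    rw [if_neg (by omega)]; omega

theorem le_sum_mul_iff {ι : Type*} (s : Finset ι) (c : ι → ℤ) (x : ι → ℕ) (b : ℤ) :
    b ≤ ∑ i ∈ s, c i * (x i : ℤ) ↔
      b.toNat + ∑ i ∈ s, (-c i).toNat * x i ≤ (-b).toNat + ∑ i ∈ s, (c i).toNat * x i := by
  have h_split (z : ℤ) : z = (z.toNat : ℤ) - ((-z).toNat : ℤ) := by omega
  have h_sum : ∑ i ∈ s, c i * (x i : ℤ) =
      ∑ i ∈ s, ((c i).toNat : ℤ) * x i - ∑ i ∈ s, ((-c i).toNat : ℤ) * x i := by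
    simp only [← Finset.sum_sub_distrib, ← sub_mul, ← h_split]
  zify
  rw [h_sum]
  have := h_split b
  constructor <;> intro <;> linarith

theorem primrecPred_le_sum_mul {c : γ → List ℤ} {b : γ → ℤ} {ν : γ → ℕ → ℕ}
    (hc : Primrec c) (hb : Primrec b) (hν : Primrec₂ ν) :
    PrimrecPred fun x => b x ≤ ∑ i ∈ Finset.range (c x).length, (c x).getD i 0 * (ν x i : ℤ) := by
  have h_coeff : Primrec₂ fun x i => (c x).getD i 0 :=
    ((Primrec.list_getD 0).comp (hc.comp Primrec.fst) Primrec.snd).to₂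
  have h_sum {k : ℤ → ℕ} (hk : Primrec k) : Primrec fun x =>
      ∑ i ∈ Finset.range (c x).length, k ((c x).getD i 0) * ν x i :=
    primrec_sum_range (Primrec.list_length.comp hc)
      (Primrec.nat_mul.comp₂ (hk.comp₂ h_coeff) hν)
  refine (Primrec.nat_le.comp
    (Primrec.nat_add.comp (primrec_toNat.comp hb) (h_sum primrec_toNat_neg))
    (Primrec.nat_add.comp (primrec_toNat_neg.comp hb) (h_sum primrec_toNat))).of_eq fun x => ?_
  rw [le_sum_mul_iff]

theorem primrec_strVal : Primrec strVal :=
  Primrec.list_foldl .id (.const 0) (Primrec.nat_add.comp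
    (Primrec.nat_mul.comp (.const 2) (Primrec.fst.comp Primrec.snd))
    ((Primrec.dom_finite Bool.toNat).comp (Primrec.snd.comp Primrec.snd))).to₂

theorem primrec₂_bitString : Primrec₂ bitString := by
  have h_bit : Primrec₂ Nat.testBit :=
    ((Primrec.eq.comp (Primrec.nat_mod.comp (Primrec.nat_div.comp Primrec.fst
      (primrec₂_pow.comp (.const 2) Primrec.snd)) (.const 2)) (.const 1)).decide).to₂.of_eq
        fun v i => (Nat.testBit_eq_decide_div_mod_eq ..).symm
  exact (Primrec.list_reverse.comp (Primrec.list_map (Primrec.list_range.comp Primrec.fst)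
    (h_bit.comp (Primrec.snd.comp Primrec.fst) Primrec.snd).to₂)).to₂

/-! ### Primitive recursiveness of the bounds -/

theorem lengthBound_eq_foldr (k m : ℕ) : lengthBound k m = (List.range k).foldr
    (fun j L => 2 ^ L + (2 ^ (elimStates^[j] m) + (2 ^ (elimStates^[j] m)).factorial + 1))
    (2 ^ (elimStates^[k] m) + (2 ^ (elimStates^[k] m)).factorial) := by
  induction k generalizing m with
  | zero => rfl
  | succ k ih => rw [lengthBound, ih, List.range_succ_eq_map, List.foldr_cons, List.foldr_map]; rfl

theorem primrec_two_pow : Primrec fun n : ℕ => 2 ^ n := primrec₂_pow.comp (.const 2) .id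

theorem primrec_elimStates : Primrec elimStates := by
  have h_link : Primrec linkStates := primrec₂_pow.comp (primrec_two_pow.comp (Primrec.nat_add.comp
    (primrec_two_pow.comp (Primrec.nat_add.comp primrec_two_pow (.const 2))) (.const 3))) (.const 2)
  exact Primrec.nat_mul.comp (Primrec.nat_mul.comp .id (primrec₂_pow.comp
    (primrec_factorial.comp primrec_two_pow) (.const 3))) (primrec₂_pow.comp h_link (.const 2))

theorem primrec₂_lengthBound : Primrec₂ lengthBound := by
  have h_size : Primrec fun m => 2 ^ m + (2 ^ m).factorial :=
    Primrec.nat_add.comp primrec_two_pow (primrec_factorial.comp primrec_two_pow)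
  have h_iter : Primrec₂ fun (p : ℕ × ℕ) j => elimStates^[j] p.2 :=
    (Primrec.nat_iterate Primrec.snd (Primrec.snd.comp Primrec.fst)
      (primrec_elimStates.comp Primrec.snd).to₂).to₂
  have h_step : Primrec₂ fun (p : ℕ × ℕ) (q : ℕ × ℕ) => 2 ^ q.2 +
      (2 ^ (elimStates^[q.1] p.2) + (2 ^ (elimStates^[q.1] p.2)).factorial + 1) :=
    (Primrec.nat_add.comp (primrec_two_pow.comp (Primrec.snd.comp Primrec.snd))
      (Primrec.succ.comp (h_size.comp
        (h_iter.comp Primrec.fst (Primrec.fst.comp Primrec.snd))))).to₂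
  refine ((Primrec.list_foldr (Primrec.list_range.comp Primrec.fst)
    (h_size.comp (h_iter.comp .id Primrec.fst)) h_step).to₂).of_eq fun k m => ?_
  exact (lengthBound_eq_foldr k m).symm

theorem primrec_wordBound : Primrec TFml.wordBound := by
  have h_add : Primrec fun n : ℕ => n + 6 := Primrec.nat_add.comp .id (.const 6)
  have h_states : Primrec TFml.stateBound := primrec₂_pow.comp h_add h_add
  exact primrec₂_lengthBound.comp .succ
    (Primrec.nat_mul.comp h_states (primrec₂_pow.comp (.const 7) .succ))

end Primrec

/-! ### Evaluation of Gödel numbers -/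

/-- The automaton with a given Gödel number. -/
def RawDFA2.ofCode (n : ℕ) : RawDFA2 :=
  let d := Denumerable.ofNat (ℕ × List ℕ × ℕ × List ℕ) n
  ⟨d.1, d.2.1, d.2.2.1, d.2.2.2⟩

theorem RawDFA2.ofCode_enc (D : RawDFA2) : ofCode D.enc = D := by
  simp only [ofCode, enc, Denumerable.ofNat_encode]

namespace TFml

/-- The formula with a given Gödel number. Tags above `7`, which are not in the range of
`TFml.enc`, are read as disjunctions. -/
def ofCode (n : ℕ) : TFml :=
  let a := n.unpair.2.unpair.1
  let b := n.unpair.2.unpair.2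
  if n.unpair.1 = 0 then reg (RawDFA2.ofCode a) b
  else if n.unpair.1 = 1 then eq a b
  else if n.unpair.1 = 2 then ne a b
  else if n.unpair.1 = 3 then len a b
  else if n.unpair.1 = 4 then num a b
  else if n.unpair.1 = 5 then lin (Denumerable.ofNat (List ℤ) a) (Denumerable.ofNat ℤ b)
  else if n.unpair.1 = 6 then and (ofCode a) (ofCode b)
  else or (ofCode a) (ofCode b)
termination_by n
decreasing_by
  all_goals
    have := Nat.unpair_add_le n
    have := Nat.unpair_add_le n.unpair.2
    omega

theorem ofCode_enc (φ : TFml) : ofCode φ.enc = φ := by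
  induction φ with
  | reg D s => rw [ofCode]; simp [enc, RawDFA2.ofCode_enc]
  | lin c b =>
    rw [ofCode]
    simp only [enc, Encodable.encode_prod_val, Nat.unpair_pair, Denumerable.ofNat_encode]
    rfl
  | and φ ψ hφ hψ => rw [ofCode]; simp [enc, hφ, hψ]
  | or φ ψ hφ hψ => rw [ofCode]; simp [enc, hφ, hψ]
  | _ => rw [ofCode]; simp [enc]

/-- Satisfaction of the formula with tag `t` and components `a` and `b`, given the truth values `P`
and `Q` of its immediate subformulas. -/
def SatStep (I : ℕ → List Bool) (ν : ℕ → ℕ) (t a b : ℕ) (P Q : Prop) : Prop :=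
  (t = 0 ∧ (RawDFA2.ofCode a).Accepts (I b)) ∨ (t = 1 ∧ I a = I b) ∨ (t = 2 ∧ I a ≠ I b) ∨
    (t = 3 ∧ (I a).length = ν b) ∨ (t = 4 ∧ strVal (I a) = ν b) ∨
    (t = 5 ∧ (lin (Denumerable.ofNat (List ℤ) a) (Denumerable.ofNat ℤ b)).Sat I ν) ∨
    (t = 6 ∧ P ∧ Q) ∨ (7 ≤ t ∧ (P ∨ Q))

theorem sat_ofCode_pair (I : ℕ → List Bool) (ν : ℕ → ℕ) (t a b : ℕ) :
    (ofCode (Nat.pair t (Nat.pair a b))).Sat I ν ↔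
      SatStep I ν t a b ((ofCode a).Sat I ν) ((ofCode b).Sat I ν) := by
  rw [ofCode]
  simp only [Nat.unpair_pair]
  rcases t with _ | _ | _ | _ | _ | _ | _ | t <;> simp [SatStep, Sat]

theorem satStep_congr {I : ℕ → List Bool} {ν : ℕ → ℕ} {t a b : ℕ} {P Q P' Q' : Prop}
    (hP : t ≠ 0 → (P ↔ P')) (hQ : t ≠ 0 → (Q ↔ Q')) :
    SatStep I ν t a b P Q ↔ SatStep I ν t a b P' Q' := by
  rcases eq_or_ne t 0 with rfl | ht
  · simp [SatStep]
  · rw [hP ht, hQ ht]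

section Primrec

variable {γ : Type*} [Primcodable γ] {I : γ → ℕ → List Bool} {ν : γ → ℕ → ℕ}

theorem primrecPred_accepts {n : γ → ℕ} {w : γ → List Bool} (hn : Primrec n) (hw : Primrec w) :
    PrimrecPred fun x => (RawDFA2.ofCode (n x)).Accepts (w x) := by
  have h_code : Primrec fun x => Denumerable.ofNat (ℕ × List ℕ × ℕ × List ℕ) (n x) :=
    (Primrec.ofNat _).comp hn
  have h_rest := Primrec.snd.comp h_code
  have h_step : Primrec₂ fun (x : γ) (p : ℕ × Bool) => (RawDFA2.ofCode (n x)).step p.1 p.2 :=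
    ((Primrec.list_getD 0).comp (Primrec.fst.comp (h_rest.comp Primrec.fst))
      (Primrec.nat_add.comp
        (Primrec.nat_mul.comp (.const 2) (Primrec.fst.comp Primrec.snd))
        ((Primrec.dom_finite Bool.toNat).comp (Primrec.snd.comp Primrec.snd)))).to₂
  have h_run : Primrec fun x => (RawDFA2.ofCode (n x)).run (w x) :=
    Primrec.list_foldl hw (Primrec.fst.comp (Primrec.snd.comp h_rest)) h_step
  have h_mem : PrimrecRel fun (L : List ℕ) (q : ℕ) => ∃ a ∈ L, a = q :=
    PrimrecRel.exists_mem_list Primrec.eq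
  refine (h_mem.comp (Primrec.snd.comp (Primrec.snd.comp h_rest)) h_run).of_eq fun x => ?_
  simp [RawDFA2.Accepts, RawDFA2.ofCode]

theorem primrecPred_satStep (hI : Primrec₂ I) (hν : Primrec₂ ν) {t a b : γ → ℕ} (ht : Primrec t)
    (ha : Primrec a) (hb : Primrec b) {P Q : γ → Prop} (hP : PrimrecPred P) (hQ : PrimrecPred Q) :
    PrimrecPred fun x => SatStep (I x) (ν x) (t x) (a x) (b x) (P x) (Q x) := by
  have h_tag (k : ℕ) : PrimrecPred fun x => t x = k := Primrec.eq.comp ht (.const k)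
  have h_Ia := hI.comp .id ha
  have h_Ib := hI.comp .id hb
  have h_νb := hν.comp .id hb
  have h_eq : PrimrecPred fun x => I x (a x) = I x (b x) := Primrec.eq.comp h_Ia h_Ib
  exact ((h_tag 0).and (primrecPred_accepts ha h_Ib)).or <|
    ((h_tag 1).and h_eq).or <|
    ((h_tag 2).and h_eq.not).or <|
    ((h_tag 3).and (Primrec.eq.comp (Primrec.list_length.comp h_Ia) h_νb)).or <|
    ((h_tag 4).and (Primrec.eq.comp (primrec_strVal.comp h_Ia) h_νb)).or <|
    ((h_tag 5).and (primrecPred_le_sum_mul ((Primrec.ofNat _).comp ha)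
      ((Primrec.ofNat _).comp hb) hν)).or <|
    ((h_tag 6).and (hP.and hQ)).or <|
    (Primrec.nat_le.comp (.const 7) ht).and (hP.or hQ)

theorem primrecRel_sat_ofCode (hI : Primrec₂ I) (hν : Primrec₂ ν) :
    PrimrecRel fun x n => (ofCode n).Sat (I x) (ν x) := by
  classical
  have h_tag : Primrec fun p : γ × List Bool => p.2.length.unpair :=
    Primrec.unpair.comp (Primrec.list_length.comp Primrec.snd)
  have h_sub : Primrec fun p : γ × List Bool => p.2.length.unpair.2.unpair :=
    Primrec.unpair.comp (Primrec.snd.comp h_tag)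
  have h_lookup {a : γ × List Bool → ℕ} (ha : Primrec a) :
      PrimrecPred fun p : γ × List Bool => p.2.getD (a p) false = true :=
    Primrec.eq.comp ((Primrec.list_getD false).comp Primrec.snd ha) (.const true)
  have h_step := primrecPred_satStep (hI.comp₂ (Primrec.fst.comp₂ .left) .right)
    (hν.comp₂ (Primrec.fst.comp₂ .left) .right) (Primrec.fst.comp h_tag) (Primrec.fst.comp h_sub)
    (Primrec.snd.comp h_sub) (h_lookup (Primrec.fst.comp h_sub)) (h_lookup (Primrec.snd.comp h_sub))
  have h_eval : Primrec₂ fun x n => decide ((ofCode n).Sat (I x) (ν x)) := by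
    refine Primrec.nat_strong_rec _ (Primrec.option_some.comp h_step.decide).to₂ fun x n => ?_
    obtain ⟨t, a, b, rfl⟩ : ∃ t a b, n = Nat.pair t (Nat.pair a b) :=
      ⟨_, _, _, by rw [Nat.pair_unpair, Nat.pair_unpair]⟩
    have := Nat.add_le_pair t (Nat.pair a b)
    have := Nat.add_le_pair a b
    have h_table {m : ℕ} (hm : m < Nat.pair t (Nat.pair a b)) :
        ((List.range (Nat.pair t (Nat.pair a b))).map fun m =>
          decide ((ofCode m).Sat (I x) (ν x))).getD m false = true ↔
            (ofCode m).Sat (I x) (ν x) := by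
      simp [hm]
    simp only [List.length_map, List.length_range, Nat.unpair_pair, sat_ofCode_pair,
      Option.some.injEq, decide_eq_decide]
    exact satStep_congr (fun ht => h_table (by omega)) fun ht => h_table (by omega)
  exact ⟨inferInstance, h_eval⟩

end Primrec

end TFml

/-! ### Bounded search for a satisfying assignment -/

theorem exists_digits {B k : ℕ} {d : ℕ → ℕ} (hd : ∀ i, d i < B) (h_zero : ∀ i ≥ k, d i = 0) :
    ∃ x < B ^ k, ∀ i, x / B ^ i % B = d i := by
  let x := finFunctionFinEquiv fun i : Fin k => (⟨d i, hd i⟩ : Fin B)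
  refine ⟨x, x.isLt, fun i => ?_⟩
  rcases lt_or_ge i k with hi | hi
  · rw [← finFunctionFinEquiv_symm_apply_val x ⟨i, hi⟩, Equiv.symm_apply_apply]
  · have h_pos : 0 < B := (Nat.zero_le _).trans_lt (hd 0)
    rw [Nat.div_eq_of_lt (x.isLt.trans_le (Nat.pow_le_pow_right h_pos hi)), Nat.zero_mod,
      h_zero i hi]

/-- The triple of a string length, a string value and an integer that a number `x` holds for the
variable index `i`, as its `i`-th digit in base `2 ^ (4 * W)`. Pairing squares a bound, whence the
factor `4` for triples of numbers below `2 ^ W`. -/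
def certEntry (W x i : ℕ) : ℕ × ℕ × ℕ :=
  let d := (x / (2 ^ (4 * W)) ^ i % 2 ^ (4 * W)).unpair
  (d.1, d.2.unpair)

/-- The assignment of the string variables held by the number `x`. -/
def certStr (W x s : ℕ) : List Bool := bitString (certEntry W x s).1 (certEntry W x s).2.1

/-- The assignment of the integer variables held by the number `x`. -/
def certInt (W x i : ℕ) : ℕ := (certEntry W x i).2.2

theorem pair_lt_two_pow {a b k : ℕ} (ha : a < 2 ^ k) (hb : b < 2 ^ k) :
    Nat.pair a b < 2 ^ (2 * k) := by
  rw [mul_comm, pow_mul]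
  exact (Nat.pair_lt_max_add_one_sq a b).trans_le (Nat.pow_le_pow_left (max_lt ha hb) 2)

theorem exists_cert {I : ℕ → List Bool} {ν : ℕ → ℕ} {W n : ℕ}
    (h_small : ∀ i, (I i).length ≤ W ∧ ν i < 2 ^ W) (h_zero : ∀ i > n, I i = [] ∧ ν i = 0) :
    ∃ x < (2 ^ (4 * W)) ^ (n + 1), certStr W x = I ∧ certInt W x = ν := by
  let d (i : ℕ) : ℕ := Nat.pair (I i).length (Nat.pair (strVal (I i)) (ν i))
  have hd (i : ℕ) : d i < 2 ^ (4 * W) := by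
    obtain ⟨h_len, h_int⟩ := h_small i
    have h_val : strVal (I i) < 2 ^ W :=
      (strVal_lt_two_pow _).trans_le (Nat.pow_le_pow_right two_pos h_len)
    have h_len' : (I i).length < 2 ^ (2 * W) :=
      h_len.trans_lt (Nat.lt_two_pow_self.trans_le (Nat.pow_le_pow_right two_pos (by omega)))
    simpa [← mul_assoc] using pair_lt_two_pow h_len' (pair_lt_two_pow h_val h_int)
  obtain ⟨x, hx, h_digit⟩ := exists_digits (k := n + 1) hd fun i hi => by
    simp [d, h_zero i hi, strVal, Nat.pair]
  have h_entry (i : ℕ) : certEntry W x i = ((I i).length, strVal (I i), ν i) := by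
    simp only [certEntry, h_digit, d, Nat.unpair_pair]
  refine ⟨x, hx, funext fun i => ?_, funext fun i => ?_⟩
  · rw [certStr, h_entry, bitString_strVal]
  · rw [certInt, h_entry]

theorem TFml.satisfiable_iff_exists_cert (φ : TFml) : (∃ I ν, φ.Sat I ν) ↔
    ∃ x < (2 ^ (4 * wordBound φ.enc)) ^ (φ.enc + 1),
      φ.Sat (certStr (wordBound φ.enc) x) (certInt (wordBound φ.enc) x) := by
  constructor
  · rintro ⟨I, ν, h⟩
    obtain ⟨I', ν', h_sat, h_small, h_zero⟩ := h.exists_small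
    obtain ⟨x, hx, rfl, rfl⟩ := exists_cert h_small h_zero
    exact ⟨x, hx, h_sat⟩
  · rintro ⟨x, -, h⟩
    exact ⟨_, _, h⟩

theorem primrec_certEntry : Primrec fun p : (ℕ × ℕ) × ℕ => certEntry p.1.1 p.1.2 p.2 := by
  have h_base : Primrec fun p : (ℕ × ℕ) × ℕ => 2 ^ (4 * p.1.1) :=
    primrec_two_pow.comp (Primrec.nat_mul.comp (.const 4) (Primrec.fst.comp Primrec.fst))
  have h_digit := Primrec.unpair.comp (Primrec.nat_mod.comp (Primrec.nat_div.comp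
    (Primrec.snd.comp Primrec.fst) (primrec₂_pow.comp h_base Primrec.snd)) h_base)
  exact (Primrec.fst.comp h_digit).pair (Primrec.unpair.comp (Primrec.snd.comp h_digit))

theorem primrec₂_certStr : Primrec₂ fun p : ℕ × ℕ => certStr p.1 p.2 :=
  primrec₂_bitString.comp (Primrec.fst.comp primrec_certEntry)
    (Primrec.fst.comp (Primrec.snd.comp primrec_certEntry))

theorem primrec₂_certInt : Primrec₂ fun p : ℕ × ℕ => certInt p.1 p.2 :=
  Primrec.snd.comp (Primrec.snd.comp primrec_certEntry)

theorem TFml.primrecPred_exists_cert {W : ℕ → ℕ} (hW : Primrec W) : PrimrecPred fun n =>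
    ∃ x < (2 ^ (4 * W n)) ^ (n + 1), (ofCode n).Sat (certStr (W n) x) (certInt (W n) x) := by
  have h_bound : Primrec fun n => (2 ^ (4 * W n)) ^ (n + 1) :=
    primrec₂_pow.comp (primrec_two_pow.comp (Primrec.nat_mul.comp (.const 4) hW)) .succ
  have h_key : Primrec fun p : ℕ × ℕ => (W p.2, p.1) :=
    (hW.comp Primrec.snd).pair Primrec.fst
  have h_sat : PrimrecRel fun x n => (ofCode n).Sat (certStr (W n) x) (certInt (W n) x) :=
    ((primrecRel_sat_ofCode primrec₂_certStr primrec₂_certInt).comp h_key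
      Primrec.snd).primrecRel
  exact h_sat.exists_lt.comp h_bound .id

theorem TREln_satisfiability_decidable_general :
    ∃ f : ℕ → Bool, Primrec f ∧
      ∀ φ : TFml, (f φ.enc = true ↔ ∃ (I : ℕ → List Bool) (ν : ℕ → ℕ), φ.Sat I ν) := by
  classical
  refine ⟨_, (TFml.primrecPred_exists_cert primrec_wordBound).decide, fun φ => ?_⟩
  rw [decide_eq_true_iff, φ.ofCode_enc, φ.satisfiable_iff_exists_cert]

/-- Satisfiability of quantifier-free formulas of `T_{RE,ln}` is decidable: a computable
function on Gödel encodings returns `true` exactly on the satisfiable formulas. -/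
theorem TREln_satisfiability_decidable :
    ∃ f : ℕ → Bool, Computable f ∧
      ∀ φ : TFml, (f φ.enc = true ↔ ∃ (I : ℕ → List Bool) (ν : ℕ → ℕ), φ.Sat I ν) :=
  let ⟨f, hf, h⟩ := TREln_satisfiability_decidable_general
  ⟨f, hf.to_comp, h⟩
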